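/- arXiv:2404.16643 — 3 statements merged into one kernel-verified Lean document; each statement's English description precedes it below -/
import Mathlib

section
/- Let L be a finite lattice with minimum element 0̂, and let i₁, i₂ ≥ 1 be integers. If there is an element m ∈ L with H̃_{i₁+i₂−2}((0̂,m)) ≠ 0, then there exist elements n₁, n₂ ∈ L such that H̃_{i₁−2}((0̂,n₁)) ≠ 0, H̃_{i₂−2}((0̂,n₂)) ≠ 0, and n₁ ∨ n₂ ≥ m. -/
open Finsupp

noncomputable section

variable (K : Type) [Field K]

section Core
variable (P : Type) [Preorder P]

/-- Order chains with `n` elements of the poset `P`, written as strictly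
decreasing tuples `(x₀ > x₁ > ⋯ > x_{n-1})`. -/
def OChain (n : ℕ) : Type := {c : Fin n → P // StrictAnti c}

/-- The chain group in "level" `n`: the `K`-vector space with basis the order chains with
`n` elements.  Level `n` corresponds to homological degree `n - 1`; in particular
`CGrp K P 0 ≅ K` is the reduced part `C̃₋₁`. -/
abbrev CGrp (n : ℕ) : Type := OChain P n →₀ K

/-- Deletion of the `k`-th entry of an order chain. -/
def odel {n : ℕ} (k : Fin (n + 1)) (c : OChain P (n + 1)) : OChain P n :=
  ⟨c.1 ∘ k.succAbove, c.2.comp_strictMono (Fin.strictMono_succAbove k)⟩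

/-- The simplicial boundary map (of the reduced simplicial chain complex of the order
complex), from level `n+1` to level `n`. -/
def cbdry (n : ℕ) : CGrp K P (n + 1) →ₗ[K] CGrp K P n :=
  Finsupp.lsum K fun c => ∑ k : Fin (n + 1), ((-1 : K) ^ (k : ℕ)) • Finsupp.lsingle (odel P k c)

/-- The cycles in level `n` (every level-0 chain, i.e. multiple of the empty chain,
is a cycle). -/
def cyclesAt : (n : ℕ) → Submodule K (CGrp K P n)
  | 0 => ⊤
  | (n + 1) => LinearMap.ker (cbdry K P n)

/-- The boundaries in level `n`. -/
def boundariesIn (n : ℕ) : Submodule K (CGrp K P n) :=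
  LinearMap.range (cbdry K P n)

/-- `H̃_{n-1}(P) ≠ 0`: nontriviality of the reduced simplicial homology (with coefficients
in `K`) of the order complex of `P` in degree `n - 1` (level `n`). -/
def RHomNontrivial (n : ℕ) : Prop := ¬ cyclesAt K P n ≤ boundariesIn K P n

end Core

/-!
Prepending `m` to a cycle `z` of order chains below `m` gives a combination `m :: z` whose boundary
is `z`. Cut its chains after the first `a + 1` entries, into an element of the tensor square of the
complex of all lists. A filtered chain homotopy moves the two factors into lists bounded by elements
`n₁` and `n₂` such that the chains below `n₁` are not exact in level `a`, and those below `n₂` not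
exact in level `b`. If no such join `n₁ ⊔ n₂` is `≥ m`, then concatenating the factors again shows
that `m :: z` is a boundary of lists bounded by `m`, up to lists bounded by elements that are not
`≥ m` and up to degenerate lists. A retraction of lists to order chains, which cones over the joins
of the entries, turns this into an equation that exhibits `z` as a boundary.
-/

open scoped TensorProduct

section FilteredMaps

variable {R ι M N : Type*} [Semiring R] [AddCommMonoid M] [Module R M] [AddCommMonoid N]
  [Module R N]

/-- `f` respects the indexed families of submodules `F` and `G`. -/
def IsFiltered (F : ι → Submodule R M) (G : ι → Submodule R N) (f : M →ₗ[R] N) : Prop :=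
  ∀ ⦃i⦄, ∀ x ∈ F i, f x ∈ G i

/-- The sum of the members of the family `F` whose index satisfies `p`. -/
def filteredSum (F : ι → Submodule R M) (p : ι → Prop) : Submodule R M :=
  ⨆ (i) (_ : p i), F i

variable {F : ι → Submodule R M} {G : ι → Submodule R N} {p : ι → Prop}

lemma le_filteredSum {i : ι} (hi : p i) : F i ≤ filteredSum F p :=
  le_iSup₂ (f := fun i (_ : p i) => F i) i hi

lemma IsFiltered.map_mem_filteredSum {f : M →ₗ[R] N} (hf : IsFiltered F G f) {x : M}
    (hx : x ∈ filteredSum F p) : f x ∈ filteredSum G p := by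
  suffices h : filteredSum F p ≤ (filteredSum G p).comap f from h hx
  exact iSup₂_le fun i hi x hx => le_filteredSum hi (hf x hx)

lemma map₂_filteredSum_le {κ : Type*} {R M N Q : Type*} [CommSemiring R] [AddCommMonoid M]
    [Module R M] [AddCommMonoid N] [Module R N] [AddCommMonoid Q] [Module R Q]
    {F : ι → Submodule R M} {G : κ → Submodule R N} {p : ι → Prop} {q : κ → Prop}
    {f : M →ₗ[R] N →ₗ[R] Q} {S : Submodule R Q}
    (h : ∀ i j, p i → q j → Submodule.map₂ f (F i) (G j) ≤ S) :
    Submodule.map₂ f (filteredSum F p) (filteredSum G q) ≤ S := by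
  simp only [filteredSum, Submodule.map₂_iSup_left, Submodule.map₂_iSup_right, iSup_le_iff]
  exact fun j hj i hi => h i j hi hj

end FilteredMaps

section TensorSquare

variable {R M N M' N' ι : Type*} [CommSemiring R] [AddCommMonoid M] [Module R M]
  [AddCommMonoid N] [Module R N] [AddCommMonoid M'] [Module R M'] [AddCommMonoid N'] [Module R N']

lemma map_mem_of_mem_map₂_mk (f : M ⊗[R] N →ₗ[R] M') {A : Submodule R M} {B : Submodule R N}
    {S : Submodule R M'} {t : M ⊗[R] N} (ht : t ∈ Submodule.map₂ (TensorProduct.mk R M N) A B)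
    (h : ∀ x ∈ A, ∀ y ∈ B, f (x ⊗ₜ y) ∈ S) : f t ∈ S := by
  suffices hle : Submodule.map₂ (TensorProduct.mk R M N) A B ≤ S.comap f from hle ht
  exact Submodule.map₂_le.2 h

lemma rTensor_mem_map₂_mk {f : M →ₗ[R] M'} {A : Submodule R M} {A' : Submodule R M'}
    {B : Submodule R N} (hf : ∀ x ∈ A, f x ∈ A') {t : M ⊗[R] N}
    (ht : t ∈ Submodule.map₂ (TensorProduct.mk R M N) A B) :
    f.rTensor N t ∈ Submodule.map₂ (TensorProduct.mk R M' N) A' B :=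
  map_mem_of_mem_map₂_mk _ ht fun x hx _ hy => Submodule.apply_mem_map₂ _ (hf x hx) hy

lemma lTensor_mem_map₂_mk {f : N →ₗ[R] N'} {A : Submodule R M} {B : Submodule R N}
    {B' : Submodule R N'} (hf : ∀ y ∈ B, f y ∈ B') {t : M ⊗[R] N}
    (ht : t ∈ Submodule.map₂ (TensorProduct.mk R M N) A B) :
    f.lTensor M t ∈ Submodule.map₂ (TensorProduct.mk R M N') A B' :=
  map_mem_of_mem_map₂_mk _ ht fun _ hx y hy => Submodule.apply_mem_map₂ _ hx (hf y hy)

lemma lTensor_rTensor_comm (f : M →ₗ[R] M') (g : N →ₗ[R] N') (t : M ⊗[R] N) :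
    g.lTensor M' (f.rTensor N t) = f.rTensor N' (g.lTensor M t) := by
  rw [← LinearMap.comp_apply, ← LinearMap.comp_apply, LinearMap.lTensor_comp_rTensor,
    LinearMap.rTensor_comp_lTensor]

/-- The family of submodules spanned by the tensors of two elements of the same `F i`. -/
def tensorSquare (F : ι → Submodule R M) (i : ι) : Submodule R (M ⊗[R] M) :=
  Submodule.map₂ (TensorProduct.mk R M M) (F i) (F i)

variable {F : ι → Submodule R M} {f : M →ₗ[R] M}

lemma IsFiltered.rTensor (hf : IsFiltered F F f) :
    IsFiltered (tensorSquare F) (tensorSquare F) (f.rTensor M) :=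
  fun i _ ht => rTensor_mem_map₂_mk (hf (i := i)) ht

lemma IsFiltered.lTensor (hf : IsFiltered F F f) :
    IsFiltered (tensorSquare F) (tensorSquare F) (f.lTensor M) :=
  fun i _ ht => lTensor_mem_map₂_mk (hf (i := i)) ht

end TensorSquare

section Supported

variable {R M α : Type*} [Semiring R] [AddCommMonoid M] [Module R M]

lemma mem_supported_mono {s t : Set α} {x : α →₀ R} (hx : x ∈ supported R R s) (h : s ⊆ t) :
    x ∈ supported R R t :=
  supported_mono h hx

lemma map_mem_of_mem_supported (f : (α →₀ R) →ₗ[R] M) {N : Submodule R M} {s : Set α}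
    {x : α →₀ R} (hx : x ∈ supported R R s) (h : ∀ a ∈ s, f (single a 1) ∈ N) : f x ∈ N := by
  suffices hle : supported R R s ≤ N.comap f from hle hx
  rw [supported_eq_span_single, Submodule.span_le]
  rintro _ ⟨a, ha, rfl⟩
  exact h a ha

lemma map_eq_of_mem_supported {f g : (α →₀ R) →ₗ[R] M} {s : Set α} {x : α →₀ R}
    (hx : x ∈ supported R R s) (h : ∀ a ∈ s, f (single a 1) = g (single a 1)) : f x = g x := by
  suffices hle : supported R R s ≤ LinearMap.eqLocus f g from hle hx
  rw [supported_eq_span_single, Submodule.span_le]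
  rintro _ ⟨a, ha, rfl⟩
  exact h a ha

end Supported

section ListComplex

variable {R X : Type*} [CommRing R]

variable (R X) in
/-- The free module on all finite lists, ordered or not, of elements of `X`. A list with `k`
entries sits in level `k`, as for `CGrp`. -/
abbrev ListGrp : Type _ := List X →₀ R

/-- Prepending the entry `x` to every list. -/
def consMap (x : X) : ListGrp R X →ₗ[R] ListGrp R X := lmapDomain R R (List.cons x)

@[simp] lemma consMap_single (x : X) (l : List X) (r : R) :
    consMap x (single l r) = single (x :: l) r :=
  mapDomain_single

lemma consMap_mem_supported {x : X} {s t : Set (List X)} {c : ListGrp R X}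
    (hc : c ∈ supported R R s) (h : ∀ l ∈ s, x :: l ∈ t) : consMap x c ∈ supported R R t :=
  map_mem_of_mem_supported _ hc fun l hl => by
    simpa only [consMap_single] using single_mem_supported R 1 (h l hl)

variable (R) in
/-- The alternating sum of the lists obtained from a list by deleting one entry. -/
def listFaces : List X → ListGrp R X
  | [] => 0
  | x :: l => single l 1 - consMap x (listFaces l)

/-- The simplicial boundary of a combination of lists. -/
def listBdry : ListGrp R X →ₗ[R] ListGrp R X := linearCombination R (listFaces R)

@[simp] lemma listBdry_single (l : List X) : listBdry (single l (1 : R)) = listFaces R l := by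
  simp only [listBdry, linearCombination_single, one_smul]

lemma listBdry_consMap (x : X) (c : ListGrp R X) :
    listBdry (consMap x c) = c - consMap x (listBdry c) := by
  suffices h : listBdry ∘ₗ consMap x = LinearMap.id - consMap x ∘ₗ listBdry (R := R) from
    LinearMap.congr_fun h c
  ext l : 2
  simp [listFaces]

@[simp] lemma listBdry_listFaces (l : List X) : listBdry (listFaces R l) = 0 := by
  induction l with
  | nil => exact map_zero _
  | cons x l ih => simp [listFaces, listBdry_consMap, ih]

@[simp] lemma listBdry_listBdry (c : ListGrp R X) : listBdry (listBdry c) = 0 := by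
  suffices h : listBdry ∘ₗ listBdry = (0 : ListGrp R X →ₗ[R] ListGrp R X) from
    LinearMap.congr_fun h c
  ext l : 2
  simp

lemma listFaces_mem_supported (l : List X) :
    listFaces R l ∈ supported R R {k | k.Sublist l ∧ k.length + 1 = l.length} := by
  induction l with
  | nil => exact Submodule.zero_mem _
  | cons x l ih =>
    refine Submodule.sub_mem _ (single_mem_supported R 1 ⟨l.sublist_cons_self x, rfl⟩)
      (consMap_mem_supported ih fun k hk => ⟨hk.1.cons_cons x, ?_⟩)
    simp only [List.length_cons, hk.2]

lemma listBdry_mem_supported {s t : Set (List X)} {c : ListGrp R X} (hc : c ∈ supported R R s)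
    (h : ∀ l ∈ s, ∀ k : List X, k.Sublist l → k.length + 1 = l.length → k ∈ t) :
    listBdry c ∈ supported R R t :=
  map_mem_of_mem_supported _ hc fun l hl => by
    rw [listBdry_single]
    exact supported_mono (fun k hk => h l hl k hk.1 hk.2) (listFaces_mem_supported l)

lemma listBdry_mem_supported_length {k : ℕ} {c : ListGrp R X}
    (hc : c ∈ supported R R {l : List X | l.length = k + 1}) :
    listBdry c ∈ supported R R {l : List X | l.length = k} :=
  listBdry_mem_supported hc fun _ hl _ _ hlen => Nat.add_right_cancel (hlen.trans hl)

lemma listBdry_eq_zero_of_mem_supported_length_zero {c : ListGrp R X}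
    (hc : c ∈ supported R R {l : List X | l.length = 0}) : listBdry c = 0 :=
  map_eq_of_mem_supported (g := 0) hc fun l hl => by
    simp only [List.length_eq_zero_iff.1 hl, listBdry_single, listFaces, LinearMap.zero_apply]

variable (R X) in
/-- The span of the lists with two equal consecutive entries. -/
def degenerate : Submodule R (ListGrp R X) := supported R R {l | ¬ l.IsChain (· ≠ ·)}

lemma consMap_mem_degenerate (x : X) {c : ListGrp R X} (hc : c ∈ degenerate R X) :
    consMap x c ∈ degenerate R X :=
  consMap_mem_supported hc fun _ hl h => hl h.tail

lemma consMap_consMap_mem_degenerate (x : X) (c : ListGrp R X) :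
    consMap x (consMap x c) ∈ degenerate R X := by
  refine map_mem_of_mem_supported (consMap x ∘ₗ consMap x) (s := Set.univ) (by simp) fun l _ => ?_
  simp only [LinearMap.comp_apply, consMap_single]
  exact single_mem_supported R 1 fun h => (List.isChain_cons_cons.1 h).1 rfl

lemma consMap_listFaces_cons_sub_mem_degenerate (x : X) (l : List X) :
    consMap x (listFaces R (x :: l)) - single (x :: l) 1 ∈ degenerate R X := by
  rw [listFaces, map_sub, consMap_single, sub_sub_cancel_left]
  exact Submodule.neg_mem _ (consMap_consMap_mem_degenerate x _)

lemma listFaces_mem_degenerate {l : List X} (hl : ¬ l.IsChain (· ≠ ·)) :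
    listFaces R l ∈ degenerate R X := by
  induction l with
  | nil => exact absurd .nil hl
  | cons x l ih =>
    match l with
    | [] => exact absurd (.singleton x) hl
    | y :: l =>
      by_cases hxy : x = y
      · subst hxy
        simpa [listFaces] using consMap_consMap_mem_degenerate x (listFaces R l)
      · have hyl : ¬ (y :: l).IsChain (· ≠ ·) := fun h => hl (.cons_cons hxy h)
        exact Submodule.sub_mem _ (single_mem_supported R 1 hyl)
          (consMap_mem_degenerate x (ih hyl))

/-- Apply to the tail of each list a linear map depending on its head. -/
def headMap {M : Type*} [AddCommMonoid M] [Module R M] (F : X → ListGrp R X →ₗ[R] M) :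
    ListGrp R X →ₗ[R] M :=
  linearCombination R fun
    | [] => 0
    | x :: l => F x (single l 1)

section HeadMap

variable {M : Type*} [AddCommMonoid M] [Module R M] (F : X → ListGrp R X →ₗ[R] M)

@[simp] lemma headMap_single_nil : headMap F (single [] 1) = 0 := by
  simp [headMap]

@[simp] lemma headMap_single_cons (x : X) (l : List X) :
    headMap F (single (x :: l) 1) = F x (single l 1) := by
  simp [headMap]

lemma headMap_consMap (x : X) (c : ListGrp R X) : headMap F (consMap x c) = F x c := by
  suffices h : headMap F ∘ₗ consMap x = F x from LinearMap.congr_fun h c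
  ext l : 2
  simp

end HeadMap

end ListComplex

section Filtration

variable {R X : Type*} [CommRing R] [Preorder X]

variable (R) in
/-- The span of the lists with all entries `≤ a`. -/
def listFiltration (a : X) : Submodule R (ListGrp R X) := supported R R {l | ∀ x ∈ l, x ≤ a}

lemma listFiltration_mono : Monotone (listFiltration R (X := X)) :=
  fun _ _ hab => supported_mono fun _ hl x hx => (hl x hx).trans hab

lemma consMap_mem_listFiltration {a : X} {c : ListGrp R X} (hc : c ∈ listFiltration R a) :
    consMap a c ∈ listFiltration R a :=
  consMap_mem_supported hc fun _ hl => List.forall_mem_cons.2 ⟨le_rfl, hl⟩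

lemma isFiltered_listBdry :
    IsFiltered (listFiltration R) (listFiltration R) (listBdry (R := R) (X := X)) :=
  fun _ _ hc => listBdry_mem_supported hc fun _ hl _ hk _ x hx => hl x (hk.subset hx)

end Filtration

section Chains

variable {X : Type*} [Preorder X]

/-- The strictly decreasing lists of `k` elements below `n`: the `k`-element order chains of the
part of `X` below `n`. -/
def chainsBelow (n : X) (k : ℕ) : Set (List X) := {l | (n :: l).Pairwise (· > ·) ∧ l.length = k}

variable (R : Type*) [CommRing R]

/-- Vanishing, in level `k`, of the reduced homology of the part of `X` below `n`. -/
def ExactBelow (n : X) (k : ℕ) : Prop :=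
  ∀ z ∈ supported R R (chainsBelow n k), listBdry z = 0 →
    ∃ y ∈ supported R R (chainsBelow n (k + 1)), listBdry y = z

/-- `v` is a contracting homotopy of the chains below `n` in every level in which they are
exact. -/
structure IsPartialContraction (n : X) (v : ListGrp R X →ₗ[R] ListGrp R X) : Prop where
  map_mem : ∀ k, ∀ c ∈ supported R R {l : List X | l.length = k},
    v c ∈ supported R R (chainsBelow n (k + 1))
  listBdry_add : ∀ k, ExactBelow R n k → ∀ c ∈ supported R R (chainsBelow n k),
    listBdry (v c) + v (listBdry c) = c

variable {R}

lemma listBdry_mem_supported_chainsBelow {n : X} {k : ℕ} {c : ListGrp R X}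
    (hc : c ∈ supported R R (chainsBelow n (k + 1))) :
    listBdry c ∈ supported R R (chainsBelow n k) :=
  listBdry_mem_supported hc fun _ hl _ hk hlen =>
    ⟨hl.1.sublist (hk.cons_cons n), Nat.add_right_cancel (hlen.trans hl.2)⟩

lemma supported_chainsBelow_le {n : X} {k : ℕ} :
    supported R R (chainsBelow n k) ≤ supported R R {l | l.length = k} :=
  supported_mono fun _ hl => hl.2

lemma cons_mem_chainsBelow_iff {n x : X} {l : List X} {k : ℕ} :
    x :: l ∈ chainsBelow n (k + 1) ↔ x < n ∧ l ∈ chainsBelow x k := by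
  simp only [chainsBelow, Set.mem_ofPred_eq, List.pairwise_cons, List.forall_mem_cons,
    List.length_cons, Nat.add_right_cancel_iff]
  exact ⟨fun h => ⟨h.1.1.1, h.1.2, h.2⟩,
    fun h => ⟨⟨⟨h.1, fun y hy => (h.2.1.1 y hy).trans h.1⟩, h.2.1⟩, h.2.2⟩⟩

lemma supported_chainsBelow_le_listFiltration {n : X} {k : ℕ} :
    supported R R (chainsBelow n k) ≤ listFiltration R n :=
  supported_mono fun _ hl x hx => ((List.pairwise_cons.1 hl.1).1 x hx).le

lemma IsPartialContraction.mem_supported_lt {n : X} {v : ListGrp R X →ₗ[R] ListGrp R X}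
    (hv : IsPartialContraction R n v) (c : ListGrp R X) :
    v c ∈ supported R R {l | ∀ x ∈ l, x < n} :=
  map_mem_of_mem_supported _ (s := Set.univ) (by simp) fun l _ =>
    supported_mono (s := chainsBelow n (l.length + 1)) (fun _ hk => (List.pairwise_cons.1 hk.1).1)
      (hv.map_mem l.length _ (single_mem_supported R 1 rfl))

end Chains

section Contraction

lemma exists_generalized_inverse_mem {k V W : Type*} [Field k] [AddCommGroup V] [Module k V]
    [AddCommGroup W] [Module k W] (f : V →ₗ[k] W) (S : Submodule k V) :
    ∃ g : W →ₗ[k] V, (∀ w, g w ∈ S) ∧ ∀ x ∈ S, f (g (f x)) = f x := by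
  obtain ⟨g, hg⟩ := (f.domRestrict S).rangeRestrict.exists_rightInverse_of_surjective
    (LinearMap.range_rangeRestrict _)
  obtain ⟨g', hg'⟩ := LinearMap.exists_extend g
  refine ⟨S.subtype ∘ₗ g', fun w => (g' w).2, fun x hx => ?_⟩
  have hright := LinearMap.congr_fun hg ⟨f x, ⟨x, hx⟩, rfl⟩
  have hextend := LinearMap.congr_fun hg' ⟨f x, ⟨x, hx⟩, rfl⟩
  simp only [LinearMap.comp_apply, Submodule.subtype_apply] at hextend ⊢
  rw [hextend]
  exact congrArg Subtype.val hright

variable {k X : Type*} [Field k] [Preorder X]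

lemma exists_generalized_inverse_listBdry (n : X) :
    ∃ g : ListGrp k X →ₗ[k] ListGrp k X,
      (∀ j, ∀ c ∈ supported k k {l : List X | l.length = j},
        g c ∈ supported k k (chainsBelow n (j + 1))) ∧
      ∀ j, ∀ c ∈ supported k k (chainsBelow n j), listBdry (g (listBdry c)) = listBdry c := by
  choose g hg hg' using fun j : ℕ => exists_generalized_inverse_mem (listBdry (R := k))
    (supported k k (chainsBelow n (j + 1)))
  have heq : ∀ {j : ℕ} {c : ListGrp k X}, c ∈ supported k k {l : List X | l.length = j} →
      linearCombination k (fun l => g l.length (single l 1)) c = g j c := fun hc =>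
    map_eq_of_mem_supported hc fun l hl => by
      rw [linearCombination_single, one_smul, show l.length = _ from hl]
  refine ⟨linearCombination k fun l => g l.length (single l 1), fun j c hc => ?_, ?_⟩
  · rw [heq hc]
    exact hg j c
  · rintro (_ | j) c hc
    · simp only [listBdry_eq_zero_of_mem_supported_length_zero (supported_chainsBelow_le hc),
        map_zero]
    · rw [heq (supported_chainsBelow_le (listBdry_mem_supported_chainsBelow hc)), hg' j c hc]

lemma exists_isPartialContraction (n : X) :
    ∃ v : ListGrp k X →ₗ[k] ListGrp k X, IsPartialContraction k n v := by
  obtain ⟨g, hg, hg'⟩ := exists_generalized_inverse_listBdry (k := k) n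
  have hgd : ∀ j, ∀ c ∈ supported k k {l : List X | l.length = j},
      g (listBdry c) ∈ supported k k (chainsBelow n j) := by
    rintro (_ | j) c hc
    · simp only [listBdry_eq_zero_of_mem_supported_length_zero hc, map_zero, Submodule.zero_mem]
    · exact hg j _ (listBdry_mem_supported_length hc)
  refine ⟨g ∘ₗ (LinearMap.id - g ∘ₗ listBdry), fun j c hc =>
    hg j _ (Submodule.sub_mem _ hc (supported_chainsBelow_le (hgd j c hc))), fun j hj c hc => ?_⟩
  obtain ⟨y, hy, hyc⟩ := hj (c - g (listBdry c))
    (Submodule.sub_mem _ hc (hgd j c (supported_chainsBelow_le hc)))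
    (by rw [map_sub, hg' j c hc, sub_self])
  simp only [LinearMap.comp_apply, LinearMap.sub_apply, LinearMap.id_apply, listBdry_listBdry,
    map_zero, sub_zero]
  rw [← hyc, hg' (j + 1) y hy, hyc, sub_add_cancel]

end Contraction

section HomotopyDefect

variable {R X : Type*} [CommRing R]

/-- The endomorphism `1 - dh - hd` of the list complex, chain homotopic to the identity via `h`. -/
def homotopyDefect (h : ListGrp R X →ₗ[R] ListGrp R X) : ListGrp R X →ₗ[R] ListGrp R X :=
  LinearMap.id - listBdry ∘ₗ h - h ∘ₗ listBdry

lemma homotopyDefect_apply (h : ListGrp R X →ₗ[R] ListGrp R X) (c : ListGrp R X) :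
    homotopyDefect h c = c - listBdry (h c) - h (listBdry c) := rfl

lemma homotopyDefect_add (h : ListGrp R X →ₗ[R] ListGrp R X) :
    homotopyDefect h + (listBdry ∘ₗ h + h ∘ₗ listBdry) = LinearMap.id := by
  rw [homotopyDefect]
  abel

lemma listBdry_comp_homotopyDefect (h : ListGrp R X →ₗ[R] ListGrp R X) :
    listBdry ∘ₗ homotopyDefect h = homotopyDefect h ∘ₗ listBdry := by
  ext1 l
  ext1
  simp [homotopyDefect_apply]

lemma isFiltered_homotopyDefect [Preorder X] {h : ListGrp R X →ₗ[R] ListGrp R X}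
    (hh : IsFiltered (listFiltration R) (listFiltration R) h) :
    IsFiltered (listFiltration R) (listFiltration R) (homotopyDefect h) :=
  fun _ _ hc => Submodule.sub_mem _ (Submodule.sub_mem _ hc (isFiltered_listBdry _ (hh _ hc)))
    (hh _ (isFiltered_listBdry _ hc))

end HomotopyDefect

section ChainHomotopy

variable {R X : Type*} [CommRing R] [Preorder X]

open Classical in
/-- The chain homotopy assembled from maps `v n`, restricted to the lists with head `n` and read
as a function of their tails. -/
def chainHomotopyAt [WellFoundedLT X] (v : X → ListGrp R X →ₗ[R] ListGrp R X) (n : X) :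
    ListGrp R X →ₗ[R] ListGrp R X :=
  (headMap (fun x => if _ : x < n then chainHomotopyAt v x else 0) - consMap n) ∘ₗ v n
termination_by wellFounded_lt.wrap n

variable [WellFoundedLT X]

/-- The chain homotopy assembled from maps `v n` that contract the chains below `n`: it satisfies
`h (n :: l) = h (v n l) - n :: v n l`, so that the homotopy defects of `n :: l` and `v n l` agree
when `v n` is a contraction. -/
def chainHomotopy (v : X → ListGrp R X →ₗ[R] ListGrp R X) : ListGrp R X →ₗ[R] ListGrp R X :=
  headMap (chainHomotopyAt v)

variable {v : X → ListGrp R X →ₗ[R] ListGrp R X}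

lemma chainHomotopyAt_mem (hv : ∀ n, IsPartialContraction R n (v n)) (n : X) (c : ListGrp R X) :
    chainHomotopyAt v n c ∈ listFiltration R n := by
  induction n using WellFoundedLT.induction generalizing c with
  | ind n ih =>
  have hvc := (hv n).mem_supported_lt c
  rw [chainHomotopyAt, LinearMap.comp_apply, LinearMap.sub_apply]
  refine Submodule.sub_mem _ (map_mem_of_mem_supported _ hvc ?_)
    (consMap_mem_listFiltration (supported_mono (fun _ hl x hx => (hl x hx).le) hvc))
  rintro (_ | ⟨x, l⟩) hl
  · simp only [headMap_single_nil, Submodule.zero_mem]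
  · have hx : x < n := hl x List.mem_cons_self
    simpa only [headMap_single_cons, dif_pos hx] using listFiltration_mono hx.le (ih x hx _)

lemma isFiltered_chainHomotopy (hv : ∀ n, IsPartialContraction R n (v n)) :
    IsFiltered (listFiltration R) (listFiltration R) (chainHomotopy v) := by
  refine fun a c hc => map_mem_of_mem_supported _ hc ?_
  rintro (_ | ⟨x, l⟩) hl
  · simp [chainHomotopy]
  · simpa only [chainHomotopy, headMap_single_cons] using
      listFiltration_mono (hl x List.mem_cons_self) (chainHomotopyAt_mem hv x _)

lemma chainHomotopy_consMap {n : X} (hv : IsPartialContraction R n (v n)) (c : ListGrp R X) :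
    chainHomotopy v (consMap n c) = chainHomotopy v (v n c) - consMap n (v n c) := by
  rw [chainHomotopy, headMap_consMap, chainHomotopyAt, LinearMap.comp_apply, LinearMap.sub_apply]
  congr 1
  refine map_eq_of_mem_supported (hv.mem_supported_lt c) ?_
  rintro (_ | ⟨x, l⟩) hl
  · simp only [headMap_single_nil]
  · simp only [headMap_single_cons, dif_pos (show x < n from hl x List.mem_cons_self)]

lemma homotopyDefect_chainHomotopy_consMap {n : X} (hv : IsPartialContraction R n (v n))
    (c : ListGrp R X) :
    homotopyDefect (chainHomotopy v) (consMap n c) =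
      consMap n (c - (listBdry (v n c) + v n (listBdry c))) +
        homotopyDefect (chainHomotopy v) (v n c) -
        chainHomotopy v (c - (listBdry (v n c) + v n (listBdry c))) := by
  simp only [homotopyDefect_apply, chainHomotopy_consMap hv, listBdry_consMap, map_sub, map_add]
  abel

lemma homotopyDefect_chainHomotopy_mem (hv : ∀ n, IsPartialContraction R n (v n)) {k : ℕ}
    {c : ListGrp R X}
    (hc : c ∈ supported R R {l : List X | l.Pairwise (· > ·) ∧ l.length = k + 1}) :
    homotopyDefect (chainHomotopy v) c ∈
      filteredSum (listFiltration R) fun n => ¬ ExactBelow R n k := by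
  suffices h : ∀ n, ∀ c ∈ supported R R (chainsBelow n k),
      homotopyDefect (chainHomotopy v) (consMap n c) ∈
        filteredSum (listFiltration R) fun n => ¬ ExactBelow R n k by
    refine map_mem_of_mem_supported _ hc ?_
    rintro (_ | ⟨n, l⟩) ⟨hl, hlen⟩
    · cases hlen
    · simpa only [consMap_single] using
        h n _ (single_mem_supported R 1 ⟨hl, Nat.add_right_cancel hlen⟩)
  intro n
  induction n using WellFoundedLT.induction with
  | ind n ih =>
  intro c hc
  by_cases hn : ExactBelow R n k
  · rw [homotopyDefect_chainHomotopy_consMap (hv n), (hv n).listBdry_add k hn c hc, sub_self,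
      map_zero, map_zero, zero_add, sub_zero]
    refine map_mem_of_mem_supported _ ((hv n).map_mem k c (supported_chainsBelow_le hc)) ?_
    rintro (_ | ⟨x, l⟩) hl
    · cases hl.2
    · obtain ⟨hx, hl⟩ := cons_mem_chainsBelow_iff.1 hl
      simpa only [consMap_single] using ih x hx _ (single_mem_supported R 1 hl)
  · have hcn := consMap_mem_listFiltration (supported_chainsBelow_le_listFiltration hc)
    exact le_filteredSum (F := listFiltration R) (p := fun n => ¬ ExactBelow R n k) hn
      (isFiltered_homotopyDefect (isFiltered_chainHomotopy hv) _ hcn)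

end ChainHomotopy

section Concatenation

variable {R X : Type*} [CommRing R]

/-- The linear extension of the concatenation of lists. -/
def concatMap : ListGrp R X ⊗[R] ListGrp R X →ₗ[R] ListGrp R X :=
  TensorProduct.lift (linearCombination R fun l => lmapDomain R R (l ++ ·))

/-- The sign of the Koszul rule: each list is multiplied by `-1` to its length. -/
def parity : ListGrp R X →ₗ[R] ListGrp R X :=
  linearCombination R fun l => single l ((-1) ^ l.length)

lemma concatMap_single_tmul (l : List X) (c : ListGrp R X) :
    concatMap (single l 1 ⊗ₜ[R] c) = lmapDomain R R (l ++ ·) c := by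
  simp [concatMap]

lemma concatMap_single_nil_tmul (c : ListGrp R X) : concatMap (single [] 1 ⊗ₜ[R] c) = c := by
  rw [concatMap_single_tmul]
  exact mapDomain_id

lemma concatMap_rTensor_consMap (x : X) (t : ListGrp R X ⊗[R] ListGrp R X) :
    concatMap ((consMap x).rTensor _ t) = consMap x (concatMap t) := by
  suffices h : concatMap ∘ₗ (consMap x).rTensor _ = consMap (R := R) x ∘ₗ concatMap from
    LinearMap.congr_fun h t
  ext l k : 5
  simp [concatMap_single_tmul]

lemma parity_consMap (x : X) (c : ListGrp R X) : parity (consMap x c) = -consMap x (parity c) := by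
  suffices h : parity ∘ₗ consMap x = -consMap (R := R) x ∘ₗ parity from LinearMap.congr_fun h c
  ext l : 2
  simp [parity, pow_succ]

lemma parity_comp_parity : parity ∘ₗ parity = (LinearMap.id : ListGrp R X →ₗ[R] _) := by
  ext l : 2
  simp [parity, ← mul_pow]

lemma parity_listFaces (l : List X) : parity (listFaces R l) = -listBdry (parity (single l 1)) := by
  induction l with
  | nil => simp [listFaces, parity]
  | cons x l ih =>
    rw [← consMap_single, parity_consMap, map_neg, listBdry_consMap, listFaces, map_sub,
      parity_consMap, ih, map_neg]
    abel

lemma listBdry_comp_parity_add_parity_comp_listBdry :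
    listBdry ∘ₗ parity + parity ∘ₗ listBdry = (0 : ListGrp R X →ₗ[R] ListGrp R X) := by
  ext l : 2
  simp [parity_listFaces]

lemma listBdry_concatMap (t : ListGrp R X ⊗[R] ListGrp R X) :
    listBdry (concatMap t) = concatMap (listBdry.rTensor _ t) +
      concatMap (parity.rTensor _ (listBdry.lTensor _ t)) := by
  suffices h : ∀ (l : List X) (c : ListGrp R X), listBdry (concatMap (single l 1 ⊗ₜ c)) =
      concatMap (listFaces R l ⊗ₜ c) + concatMap (parity (single l 1) ⊗ₜ listBdry c) by
    refine LinearMap.congr_fun (f := listBdry ∘ₗ concatMap) (g := concatMap ∘ₗ listBdry.rTensor _ +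
      concatMap ∘ₗ parity.rTensor _ ∘ₗ listBdry.lTensor _) ?_ t
    ext l k : 5
    simpa using h l (single k 1)
  intro l c
  induction l with
  | nil => simp [parity, concatMap_single_nil_tmul, listFaces]
  | cons x l ih =>
    have hcons (b c : ListGrp R X) :
        concatMap (consMap x b ⊗ₜ c) = consMap x (concatMap (b ⊗ₜ c)) :=
      concatMap_rTensor_consMap x (b ⊗ₜ c)
    have hneg (b c : ListGrp R X) : concatMap ((-b) ⊗ₜ[R] c) = -concatMap (b ⊗ₜ c) := by
      simp only [concatMap, TensorProduct.lift.tmul, map_neg, LinearMap.neg_apply]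
    rw [← consMap_single, hcons, listBdry_consMap, ih, parity_consMap, listFaces,
      TensorProduct.sub_tmul, hneg, map_sub, hcons, hcons, map_add]
    abel

end Concatenation

section ConcatenationFiltration

variable {R X : Type*} [CommRing R] [Preorder X]

lemma isFiltered_concatMap :
    IsFiltered (tensorSquare (listFiltration R)) (listFiltration R)
      (concatMap (R := R) (X := X)) := by
  intro a t ht
  refine map_mem_of_mem_map₂_mk _ ht fun b hb c hc => ?_
  refine map_mem_of_mem_supported (concatMap ∘ₗ (TensorProduct.mk R _ _).flip c) hb fun l hl => ?_
  simp only [LinearMap.comp_apply, LinearMap.flip_apply, TensorProduct.mk_apply,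
    concatMap_single_tmul]
  refine map_mem_of_mem_supported _ hc fun k hk => ?_
  rw [lmapDomain_apply, mapDomain_single]
  exact single_mem_supported R 1 (List.forall_mem_append.2 ⟨hl, hk⟩)

lemma isFiltered_parity :
    IsFiltered (listFiltration R) (listFiltration R) (parity (R := R) (X := X)) :=
  fun _ _ hc => map_mem_of_mem_supported _ hc fun l hl => by
    rw [parity, linearCombination_single, one_smul]
    exact single_mem_supported R _ hl

end ConcatenationFiltration

section RelativeBoundaries

variable {R X : Type*} [CommRing R]

lemma rTensor_homotopyDefect_add (h : ListGrp R X →ₗ[R] ListGrp R X)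
    (t : ListGrp R X ⊗[R] ListGrp R X) :
    (homotopyDefect h).rTensor _ t +
      (listBdry.rTensor _ (h.rTensor _ t) + h.rTensor _ (listBdry.rTensor _ t)) = t := by
  have heq := congrArg (LinearMap.rTensor (ListGrp R X) · t) (homotopyDefect_add h)
  simpa only [LinearMap.rTensor_add, LinearMap.add_apply, LinearMap.rTensor_comp_apply,
    LinearMap.rTensor_id_apply] using heq

lemma lTensor_homotopyDefect_add (h : ListGrp R X →ₗ[R] ListGrp R X)
    (t : ListGrp R X ⊗[R] ListGrp R X) :
    (homotopyDefect h).lTensor _ t +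
      (listBdry.lTensor _ (h.lTensor _ t) + h.lTensor _ (listBdry.lTensor _ t)) = t := by
  have heq := congrArg (LinearMap.lTensor (ListGrp R X) · t) (homotopyDefect_add h)
  simpa only [LinearMap.lTensor_add, LinearMap.add_apply, LinearMap.lTensor_comp_apply,
    LinearMap.lTensor_id_apply] using heq

lemma rTensor_listBdry_rTensor_parity_add (t : ListGrp R X ⊗[R] ListGrp R X) :
    listBdry.rTensor _ (parity.rTensor _ t) + parity.rTensor _ (listBdry.rTensor _ t) = 0 := by
  have heq := congrArg (LinearMap.rTensor (ListGrp R X) · t)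
    (listBdry_comp_parity_add_parity_comp_listBdry (R := R) (X := X))
  simpa only [LinearMap.rTensor_add, LinearMap.add_apply, LinearMap.rTensor_comp_apply,
    LinearMap.rTensor_zero, LinearMap.zero_apply] using heq

lemma rTensor_parity_rTensor_parity (t : ListGrp R X ⊗[R] ListGrp R X) :
    parity.rTensor _ (parity.rTensor _ t) = t := by
  rw [← LinearMap.rTensor_comp_apply, parity_comp_parity, LinearMap.rTensor_id_apply]

lemma rTensor_listBdry_rTensor_homotopyDefect (h : ListGrp R X →ₗ[R] ListGrp R X)
    (t : ListGrp R X ⊗[R] ListGrp R X) :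
    listBdry.rTensor _ ((homotopyDefect h).rTensor _ t) =
      (homotopyDefect h).rTensor _ (listBdry.rTensor _ t) := by
  rw [← LinearMap.rTensor_comp_apply, ← LinearMap.rTensor_comp_apply,
    listBdry_comp_homotopyDefect]

variable [Preorder X]

variable (R) in
/-- The boundaries of combinations of lists with entries `≤ m`, modulo degenerate lists and modulo
lists with an upper bound that is not `≥ m`. -/
def relBoundaries (m : X) : Submodule R (ListGrp R X) :=
  (listFiltration R m).map listBdry ⊔ filteredSum (listFiltration R) (¬ m ≤ ·) ⊔ degenerate R X

variable {m : X} {c : ListGrp R X} {t : ListGrp R X ⊗[R] ListGrp R X}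

lemma listBdry_mem_relBoundaries (hc : c ∈ listFiltration R m) : listBdry c ∈ relBoundaries R m :=
  Submodule.mem_sup_left (Submodule.mem_sup_left (Submodule.mem_map_of_mem hc))

lemma filteredSum_le_relBoundaries :
    filteredSum (listFiltration R) (¬ m ≤ ·) ≤ relBoundaries R m :=
  le_sup_right.trans le_sup_left

lemma degenerate_le_relBoundaries : degenerate R X ≤ relBoundaries R m := le_sup_right

/-- A tensor of lists with entries `≤ m` that is a cycle in the right factor and, modulo lists
with an upper bound that is not `≥ m`, a cycle in the left factor. -/
structure IsRelBicycle (m : X) (t : ListGrp R X ⊗[R] ListGrp R X) : Prop where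
  mem : t ∈ tensorSquare (listFiltration R) m
  rTensor_listBdry_mem :
    listBdry.rTensor _ t ∈ filteredSum (tensorSquare (listFiltration R)) (¬ m ≤ ·)
  lTensor_listBdry_eq_zero : listBdry.lTensor _ t = 0

lemma concatMap_mem_relBoundaries
    (ht : t ∈ filteredSum (tensorSquare (listFiltration R)) (¬ m ≤ ·)) :
    concatMap t ∈ relBoundaries R m :=
  filteredSum_le_relBoundaries (isFiltered_concatMap.map_mem_filteredSum ht)

variable {h : ListGrp R X →ₗ[R] ListGrp R X}

lemma IsRelBicycle.rTensor_homotopyDefect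
    (hh : IsFiltered (listFiltration R) (listFiltration R) h) (ht : IsRelBicycle m t) :
    IsRelBicycle m ((homotopyDefect h).rTensor _ t) where
  mem := (isFiltered_homotopyDefect hh).rTensor _ ht.mem
  rTensor_listBdry_mem := by
    rw [rTensor_listBdry_rTensor_homotopyDefect]
    exact (isFiltered_homotopyDefect hh).rTensor.map_mem_filteredSum ht.rTensor_listBdry_mem
  lTensor_listBdry_eq_zero := by
    rw [lTensor_rTensor_comm, ht.lTensor_listBdry_eq_zero, map_zero]

lemma IsRelBicycle.concatMap_sub_rTensor_mem
    (hh : IsFiltered (listFiltration R) (listFiltration R) h) (ht : IsRelBicycle m t) :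
    concatMap t - concatMap ((homotopyDefect h).rTensor _ t) ∈ relBoundaries R m := by
  have hd : concatMap (listBdry.rTensor _ (h.rTensor _ t)) =
      listBdry (concatMap (h.rTensor _ t)) := by
    rw [listBdry_concatMap, lTensor_rTensor_comm, ht.lTensor_listBdry_eq_zero, map_zero, map_zero,
      map_zero, add_zero]
  have heq := congrArg concatMap (rTensor_homotopyDefect_add h t)
  rw [map_add, map_add, hd] at heq
  rw [← heq, add_sub_cancel_left]
  exact Submodule.add_mem _
    (listBdry_mem_relBoundaries (isFiltered_concatMap _ (hh.rTensor _ ht.mem)))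
    (concatMap_mem_relBoundaries (hh.rTensor.map_mem_filteredSum ht.rTensor_listBdry_mem))

lemma IsRelBicycle.concatMap_sub_lTensor_mem
    (hh : IsFiltered (listFiltration R) (listFiltration R) h) (ht : IsRelBicycle m t) :
    concatMap t - concatMap ((homotopyDefect h).lTensor _ t) ∈ relBoundaries R m := by
  let s := parity.rTensor _ (h.lTensor _ t)
  have hs : s ∈ tensorSquare (listFiltration R) m :=
    isFiltered_parity.rTensor _ (hh.lTensor _ ht.mem)
  have hsR : parity.rTensor _ (listBdry.lTensor _ s) = listBdry.lTensor _ (h.lTensor _ t) := by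
    rw [← lTensor_rTensor_comm, rTensor_parity_rTensor_parity]
  have hsL : concatMap (listBdry.rTensor _ s) ∈ relBoundaries R m := by
    have heq := congrArg concatMap (rTensor_listBdry_rTensor_parity_add (h.lTensor _ t))
    rw [map_add, map_zero] at heq
    rw [eq_neg_of_add_eq_zero_left heq, ← lTensor_rTensor_comm]
    exact Submodule.neg_mem _ (concatMap_mem_relBoundaries
      (isFiltered_parity.rTensor.map_mem_filteredSum
        (hh.lTensor.map_mem_filteredSum ht.rTensor_listBdry_mem)))
  have hd : concatMap (listBdry.lTensor _ (h.lTensor _ t)) =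
      listBdry (concatMap s) - concatMap (listBdry.rTensor _ s) := by
    rw [listBdry_concatMap, hsR, add_sub_cancel_left]
  have heq := congrArg concatMap (lTensor_homotopyDefect_add h t)
  rw [ht.lTensor_listBdry_eq_zero, map_zero, add_zero, map_add, hd] at heq
  rw [← heq, add_sub_cancel_left]
  exact Submodule.sub_mem _ (listBdry_mem_relBoundaries (isFiltered_concatMap _ hs)) hsL

lemma IsRelBicycle.concatMap_sub_map_mem
    (hh : IsFiltered (listFiltration R) (listFiltration R) h) (ht : IsRelBicycle m t) :
    concatMap t - concatMap (TensorProduct.map (homotopyDefect h) (homotopyDefect h) t) ∈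
      relBoundaries R m := by
  rw [← LinearMap.lTensor_comp_rTensor, LinearMap.comp_apply]
  exact sub_add_sub_cancel (concatMap t) _ _ ▸ Submodule.add_mem _ (ht.concatMap_sub_rTensor_mem hh)
    ((ht.rTensor_homotopyDefect hh).concatMap_sub_lTensor_mem hh)

end RelativeBoundaries

section Cut

variable {R X : Type*} [CommRing R]

variable (R) in
/-- The cut of a list behind its `p`-th entry: for `p > 0`, the first `p` entries, tensored with the
boundary of the list obtained by deleting all entries before the `p`-th one. Keeping the `p`-th
entry on both sides makes the right factor a cycle. -/
def cut : ℕ → List X → ListGrp R X ⊗[R] ListGrp R X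
  | 0, l => single [] 1 ⊗ₜ single l 1
  | _ + 1, [] => 0
  | 1, x :: l => single [x] 1 ⊗ₜ listFaces R (x :: l)
  | p + 2, x :: l => (consMap x).rTensor _ (cut (p + 1) l)

/-- The linear extension of `cut`. -/
def cutMap (p : ℕ) : ListGrp R X →ₗ[R] ListGrp R X ⊗[R] ListGrp R X :=
  linearCombination R (cut R p)

@[simp] lemma cutMap_single (p : ℕ) (l : List X) : cutMap p (single l (1 : R)) = cut R p l := by
  simp only [cutMap, linearCombination_single, one_smul]

lemma cutMap_zero_apply (c : ListGrp R X) : cutMap 0 c = single [] 1 ⊗ₜ c := by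
  suffices h : cutMap 0 = TensorProduct.mk R _ (ListGrp R X) (single [] 1) from
    LinearMap.congr_fun h c
  ext l : 2
  simp [cut]

lemma cutMap_one_consMap (x : X) (c : ListGrp R X) :
    cutMap 1 (consMap x c) = single [x] 1 ⊗ₜ listBdry (consMap x c) := by
  suffices h : cutMap 1 ∘ₗ consMap x =
      TensorProduct.mk R _ (ListGrp R X) (single [x] 1) ∘ₗ listBdry ∘ₗ consMap x from
    LinearMap.congr_fun h c
  ext l : 2
  simp [cut]

lemma cutMap_add_two_consMap (p : ℕ) (x : X) (c : ListGrp R X) :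
    cutMap (p + 2) (consMap x c) = (consMap x).rTensor _ (cutMap (p + 1) c) := by
  suffices h : cutMap (p + 2) ∘ₗ consMap x = (consMap x).rTensor _ ∘ₗ cutMap (R := R) (p + 1) from
    LinearMap.congr_fun h c
  ext l : 2
  simp [cut]

lemma cutMap_succ_consMap_listFaces (p : ℕ) (x : X) (l : List X) :
    cutMap (p + 1) (consMap x (listFaces R l)) =
      (consMap x).rTensor _ (cutMap p (listFaces R l)) := by
  cases p with
  | zero =>
    rw [cutMap_one_consMap, listBdry_consMap, listBdry_listFaces, map_zero, sub_zero,
      cutMap_zero_apply, LinearMap.rTensor_tmul, consMap_single]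
  | succ p => exact cutMap_add_two_consMap p x _

lemma rTensor_listBdry_consMap_add (x : X) (t : ListGrp R X ⊗[R] ListGrp R X) :
    listBdry.rTensor _ ((consMap x).rTensor _ t) +
      (consMap x).rTensor _ (listBdry.rTensor _ t) = t := by
  have h : listBdry ∘ₗ consMap x + consMap x ∘ₗ listBdry (R := R) = LinearMap.id :=
    LinearMap.ext fun c => by simp [listBdry_consMap]
  have heq := congrArg (LinearMap.rTensor (ListGrp R X) · t) h
  simpa only [LinearMap.rTensor_add, LinearMap.add_apply, LinearMap.rTensor_comp_apply,
    LinearMap.rTensor_id_apply] using heq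

lemma rTensor_listBdry_cut_succ (p : ℕ) (l : List X) :
    listBdry.rTensor _ (cut R (p + 1) l) = cutMap p (listFaces R l) := by
  induction p generalizing l with
  | zero => cases l <;> simp [cut, listFaces, cutMap_zero_apply]
  | succ p ih =>
    cases l with
    | nil => simp [cut, listFaces]
    | cons x l =>
      rw [cut, listFaces, map_sub, cutMap_single, cutMap_succ_consMap_listFaces, ← ih]
      exact eq_sub_of_add_eq (rTensor_listBdry_consMap_add x _)

lemma lTensor_listBdry_cut_succ (p : ℕ) (l : List X) :
    listBdry.lTensor _ (cut R (p + 1) l) = 0 := by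
  induction p generalizing l with
  | zero => cases l <;> simp [cut]
  | succ p ih =>
    cases l with
    | nil => simp [cut]
    | cons x l => rw [cut, lTensor_rTensor_comm, ih, map_zero]

lemma cut_mem (p : ℕ) (l : List X) :
    cut R p l ∈ Submodule.map₂ (TensorProduct.mk R _ _)
      (supported R R {k | k.Sublist l ∧ k.length = p})
      (supported R R {k | k.Sublist l ∧ k.length + p = l.length}) := by
  match p, l with
  | 0, l =>
    exact Submodule.apply_mem_map₂ _ (single_mem_supported R 1 ⟨l.nil_sublist, rfl⟩)
      (single_mem_supported R 1 ⟨List.Sublist.refl l, rfl⟩)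
  | _ + 1, [] => exact Submodule.zero_mem _
  | 1, x :: l =>
    exact Submodule.apply_mem_map₂ _
      (single_mem_supported R 1 ⟨l.nil_sublist.cons_cons x, rfl⟩) (listFaces_mem_supported _)
  | p + 2, x :: l =>
    rw [cut]
    refine Submodule.map₂_le_map₂_right (supported_mono ?_)
      (rTensor_mem_map₂_mk (fun c hc => consMap_mem_supported hc ?_) (cut_mem (p + 1) l))
    · exact fun k hk => ⟨hk.1.cons x, congrArg (· + 1) hk.2⟩
    · exact fun k hk => ⟨hk.1.cons_cons x, congrArg (· + 1) hk.2⟩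

lemma concatMap_cut_succ_sub_mem_degenerate {p : ℕ} {l : List X} (hl : p + 1 ≤ l.length) :
    concatMap (cut R (p + 1) l) - single l 1 ∈ degenerate R X := by
  induction p generalizing l with
  | zero =>
    obtain _ | ⟨x, l⟩ := l
    · cases hl
    · have hcat : concatMap (cut R 1 (x :: l)) = consMap x (listFaces R (x :: l)) :=
        concatMap_single_tmul [x] _
      rw [zero_add, hcat]
      exact consMap_listFaces_cons_sub_mem_degenerate x l
  | succ p ih =>
    obtain _ | ⟨x, l⟩ := l
    · cases hl
    · rw [cut, concatMap_rTensor_consMap, ← consMap_single, ← map_sub]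
      exact consMap_mem_degenerate x (ih (Nat.le_of_succ_le_succ hl))

end Cut

section Retraction

variable {R X : Type*} [CommRing R] [SemilatticeSup X]

/-- The join of the entries of the nonempty list `x :: l`. -/
def listJoin (x : X) (l : List X) : X := l.foldr (· ⊔ ·) x

lemma listJoin_le_iff {x a : X} {l : List X} : listJoin x l ≤ a ↔ ∀ y ∈ x :: l, y ≤ a := by
  induction l with
  | nil => simp [listJoin]
  | cons y l ih =>
    simp only [listJoin, List.foldr_cons, sup_le_iff, List.forall_mem_cons] at ih ⊢
    rw [ih, and_left_comm]

lemma listJoin_eq_of_pairwise_gt {x : X} {l : List X} (h : (x :: l).Pairwise (· > ·)) :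
    listJoin x l = x :=
  le_antisymm
    (listJoin_le_iff.2 (List.forall_mem_cons.2
      ⟨le_rfl, fun y hy => ((List.pairwise_cons.1 h).1 y hy).le⟩))
    (listJoin_le_iff.1 le_rfl x List.mem_cons_self)

variable (R X) in
/-- A chain map from lists to weakly decreasing lists, in levels up to `n`: a list is sent to the
cone, with apex the join of its entries, over the image of its boundary. -/
def retract : ℕ → ListGrp R X →ₗ[R] ListGrp R X
  | 0 => linearCombination R fun
    | [] => single [] 1
    | _ :: _ => 0
  | n + 1 => linearCombination R fun
    | [] => single [] 1
    | x :: l => consMap (listJoin x l) (retract n (listFaces R (x :: l)))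

@[simp] lemma retract_single_nil (n : ℕ) : retract R X n (single [] 1) = single [] 1 := by
  cases n <;> simp [retract]

@[simp] lemma retract_zero_single_cons (x : X) (l : List X) :
    retract R X 0 (single (x :: l) 1) = 0 := by
  simp [retract]

@[simp] lemma retract_succ_single_cons (n : ℕ) (x : X) (l : List X) :
    retract R X (n + 1) (single (x :: l) 1) =
      consMap (listJoin x l) (retract R X n (listFaces R (x :: l))) := by
  simp [retract]

lemma listBdry_retract_zero (c : ListGrp R X) : listBdry (retract R X 0 c) = 0 := by
  suffices h : listBdry ∘ₗ retract R X 0 = 0 from LinearMap.congr_fun h c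
  ext l : 2
  cases l <;> simp [listFaces]

lemma listBdry_retract_succ (n : ℕ) (c : ListGrp R X) :
    listBdry (retract R X (n + 1) c) = retract R X n (listBdry c) := by
  suffices h : listBdry ∘ₗ retract R X (n + 1) = retract R X n ∘ₗ listBdry from
    LinearMap.congr_fun h c
  ext1 l
  ext1
  simp only [LinearMap.comp_apply, lsingle_apply, listBdry_single]
  obtain _ | ⟨x, l⟩ := l
  · simp [listFaces]
  · have hcycle : listBdry (retract R X n (listFaces R (x :: l))) = 0 := by
      cases n with
      | zero => exact listBdry_retract_zero _
      | succ n => rw [listBdry_retract_succ n, listBdry_listFaces, map_zero]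
    rw [retract_succ_single_cons, listBdry_consMap, hcycle, map_zero, sub_zero]

lemma retract_mem_supported_pairwise_ge (n : ℕ) {a : X} {c : ListGrp R X}
    (hc : c ∈ listFiltration R a) :
    retract R X n c ∈ supported R R {l | (a :: l).Pairwise (· ≥ ·)} := by
  refine map_mem_of_mem_supported _ hc ?_
  rintro (_ | ⟨x, l⟩) hl
  · rw [retract_single_nil]
    exact single_mem_supported R 1 (List.pairwise_singleton _ a)
  · cases n with
    | zero => simp only [retract_zero_single_cons, Submodule.zero_mem]
    | succ n =>
      have hfaces : listFaces R (x :: l) ∈ listFiltration R (listJoin x l) := by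
        rw [← listBdry_single]
        exact isFiltered_listBdry _ (single_mem_supported R 1 (listJoin_le_iff.1 le_rfl))
      rw [retract_succ_single_cons]
      refine consMap_mem_supported (retract_mem_supported_pairwise_ge n hfaces) fun k hk => ?_
      have hle : listJoin x l ≤ a := listJoin_le_iff.2 hl
      exact List.pairwise_cons.2 ⟨List.forall_mem_cons.2
        ⟨hle, fun y hy => ((List.pairwise_cons.1 hk).1 y hy).trans hle⟩, hk⟩

lemma retract_mem_degenerate (n : ℕ) {c : ListGrp R X} (hc : c ∈ degenerate R X) :
    retract R X n c ∈ degenerate R X := by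
  refine map_mem_of_mem_supported _ hc ?_
  rintro (_ | ⟨x, l⟩) hl
  · exact absurd .nil hl
  · cases n with
    | zero => simp only [retract_zero_single_cons, Submodule.zero_mem]
    | succ n =>
      rw [retract_succ_single_cons]
      exact consMap_mem_degenerate _ (retract_mem_degenerate n (listFaces_mem_degenerate hl))

lemma retract_sub_mem_degenerate {n : ℕ} {c : ListGrp R X}
    (hc : c ∈ supported R R {l : List X | l.Pairwise (· > ·) ∧ l.length ≤ n}) :
    retract R X n c - c ∈ degenerate R X := by
  refine map_mem_of_mem_supported (retract R X n - LinearMap.id) hc ?_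
  rintro (_ | ⟨x, l⟩) ⟨hl, hlen⟩
  · simp
  · cases n with
    | zero => cases hlen
    | succ n =>
      have hfaces : retract R X n (listFaces R (x :: l)) - listFaces R (x :: l) ∈
          degenerate R X := by
        refine retract_sub_mem_degenerate (supported_mono ?_ (listFaces_mem_supported (x :: l)))
        exact fun k hk => ⟨hl.sublist hk.1, Nat.le_of_succ_le_succ (hk.2.trans_le hlen)⟩
      have hsum := Submodule.add_mem _ (consMap_mem_degenerate x hfaces)
        (consMap_listFaces_cons_sub_mem_degenerate x l)
      rw [map_sub, sub_add_sub_cancel] at hsum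
      rwa [LinearMap.sub_apply, LinearMap.id_apply, retract_succ_single_cons,
        listJoin_eq_of_pairwise_gt hl]

end Retraction

section StrictPart

variable {R X : Type*} [CommRing R]

open Classical in
variable (R X) in
/-- Discards all lists except the `k`-element order chains. -/
def strictPart [Preorder X] (k : ℕ) : ListGrp R X →ₗ[R] ListGrp R X :=
  linearCombination R fun l => if l.Pairwise (· > ·) ∧ l.length = k then single l 1 else 0

section Preorder

variable [Preorder X]

lemma strictPart_single_of_pos {k : ℕ} {l : List X} (h : l.Pairwise (· > ·) ∧ l.length = k) :
    strictPart R X k (single l 1) = single l 1 := by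
  rw [strictPart, linearCombination_single, one_smul, if_pos h]

lemma strictPart_single_of_neg {k : ℕ} {l : List X} (h : ¬(l.Pairwise (· > ·) ∧ l.length = k)) :
    strictPart R X k (single l 1) = 0 := by
  rw [strictPart, linearCombination_single, one_smul, if_neg h]

lemma strictPart_mem_supported (k : ℕ) {s : Set (List X)} {c : ListGrp R X}
    (hc : c ∈ supported R R s) :
    strictPart R X k c ∈
      supported R R {l | l ∈ s ∧ l.Pairwise (· > ·) ∧ l.length = k} :=
  map_mem_of_mem_supported _ hc fun l hl => by
    by_cases h : l.Pairwise (· > ·) ∧ l.length = k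
    · rw [strictPart_single_of_pos h]
      exact single_mem_supported R 1 ⟨hl, h⟩
    · rw [strictPart_single_of_neg h]
      exact Submodule.zero_mem _

lemma strictPart_eq_self {k : ℕ} {c : ListGrp R X}
    (hc : c ∈ supported R R {l : List X | l.Pairwise (· > ·) ∧ l.length = k}) :
    strictPart R X k c = c :=
  map_eq_of_mem_supported (g := LinearMap.id) hc fun _ => strictPart_single_of_pos

lemma strictPart_eq_zero_of_mem_degenerate (k : ℕ) {c : ListGrp R X} (hc : c ∈ degenerate R X) :
    strictPart R X k c = 0 :=
  map_eq_of_mem_supported (g := 0) hc fun _ hl =>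
    strictPart_single_of_neg fun h => hl (h.1.imp ne_of_gt).isChain

end Preorder

lemma pairwise_gt_of_pairwise_ge_of_isChain_ne [PartialOrder X] {l : List X}
    (hge : l.Pairwise (· ≥ ·)) (hne : l.IsChain (· ≠ ·)) : l.Pairwise (· > ·) := by
  refine List.isChain_iff_pairwise.1 (List.isChain_iff_getElem.2 fun i hi => ?_)
  exact lt_of_le_of_ne (List.isChain_iff_getElem.1 hge.isChain i hi)
    (List.isChain_iff_getElem.1 hne i hi).symm

lemma listBdry_strictPart_succ [PartialOrder X] (k : ℕ) {c : ListGrp R X}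
    (hc : c ∈ supported R R {l : List X | l.Pairwise (· ≥ ·)}) :
    listBdry (strictPart R X (k + 1) c) = strictPart R X k (listBdry c) := by
  suffices h : ∀ l : List X, l.Pairwise (· ≥ ·) →
      (listBdry ∘ₗ strictPart R X (k + 1)) (single l 1) =
        (strictPart R X k ∘ₗ listBdry) (single l 1) from map_eq_of_mem_supported hc h
  intro l hge
  simp only [LinearMap.comp_apply, listBdry_single]
  by_cases hne : l.IsChain (· ≠ ·)
  · have hgt := pairwise_gt_of_pairwise_ge_of_isChain_ne hge hne
    have hfaces := listFaces_mem_supported (R := R) l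
    by_cases hlen : l.length = k + 1
    · rw [strictPart_single_of_pos ⟨hgt, hlen⟩, listBdry_single, strictPart_eq_self]
      exact mem_supported_mono hfaces fun j hj =>
        ⟨hgt.sublist hj.1, Nat.add_right_cancel (hj.2.trans hlen)⟩
    · rw [strictPart_single_of_neg fun h => hlen h.2, map_zero]
      refine (map_eq_of_mem_supported (g := 0) hfaces fun j hj => ?_).symm
      exact strictPart_single_of_neg fun h => hlen (hj.2 ▸ congrArg (· + 1) h.2)
  · have hsingle : single l (1 : R) ∈ degenerate R X := single_mem_supported R 1 hne
    rw [strictPart_eq_zero_of_mem_degenerate _ hsingle, map_zero,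
      strictPart_eq_zero_of_mem_degenerate _ (listFaces_mem_degenerate hne)]

end StrictPart

section Tails

variable {R X : Type*} [CommRing R]

open Classical in
variable (R) in
/-- Discards all lists except those with head `m`, from which `m` is removed. -/
def tailsAt (m : X) : ListGrp R X →ₗ[R] ListGrp R X :=
  headMap fun x => if x = m then LinearMap.id else 0

@[simp] lemma tailsAt_single_nil (m : X) : tailsAt R m (single [] 1) = 0 := headMap_single_nil _

@[simp] lemma tailsAt_consMap_self (m : X) (c : ListGrp R X) : tailsAt R m (consMap m c) = c := by
  rw [tailsAt, headMap_consMap, if_pos rfl, LinearMap.id_apply]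

lemma tailsAt_consMap_of_ne {m x : X} (h : x ≠ m) (c : ListGrp R X) :
    tailsAt R m (consMap x c) = 0 := by
  rw [tailsAt, headMap_consMap, if_neg h, LinearMap.zero_apply]

lemma tailsAt_eq_zero {m : X} {c : ListGrp R X} (hc : c ∈ supported R R {l | m ∉ l}) :
    tailsAt R m c = 0 := by
  refine map_eq_of_mem_supported (g := 0) hc ?_
  rintro (_ | ⟨x, l⟩) hl
  · exact tailsAt_single_nil m
  · rw [← consMap_single]
    exact tailsAt_consMap_of_ne (fun h => hl (List.mem_cons.2 (.inl h.symm))) _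

lemma tailsAt_mem_supported {m : X} {s t : Set (List X)} {c : ListGrp R X}
    (hc : c ∈ supported R R s) (h : ∀ l, m :: l ∈ s → l ∈ t) :
    tailsAt R m c ∈ supported R R t := by
  refine map_mem_of_mem_supported _ hc ?_
  rintro (_ | ⟨x, l⟩) hl
  · simp only [tailsAt_single_nil, Submodule.zero_mem]
  · rw [← consMap_single]
    by_cases hx : x = m
    · subst hx
      rw [tailsAt_consMap_self]
      exact single_mem_supported R 1 (h l hl)
    · rw [tailsAt_consMap_of_ne hx]
      exact Submodule.zero_mem _

lemma tailsAt_listBdry [Preorder X] {m : X} {c : ListGrp R X}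
    (hc : c ∈ supported R R {l : List X | l.Pairwise (· > ·) ∧ ∀ x ∈ l, x ≤ m}) :
    tailsAt R m (listBdry c) = -listBdry (tailsAt R m c) := by
  refine map_eq_of_mem_supported (f := tailsAt R m ∘ₗ listBdry)
    (g := -listBdry ∘ₗ tailsAt R m) hc ?_
  rintro (_ | ⟨x, l⟩) ⟨hl, hm⟩
  · simp [listFaces]
  · have htail : tailsAt R m (single l 1) = 0 :=
      tailsAt_eq_zero (single_mem_supported R 1 fun hml =>
        ((List.pairwise_cons.1 hl).1 m hml).not_ge (hm x List.mem_cons_self))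
    simp only [LinearMap.comp_apply, LinearMap.neg_apply, ← consMap_single, listBdry_consMap,
      map_sub, htail, zero_sub, listBdry_single]
    by_cases hx : x = m
    · subst hx
      simp only [tailsAt_consMap_self, listBdry_single]
    · simp only [tailsAt_consMap_of_ne hx, map_zero]

end Tails

section RelativeCycles

variable {R X : Type*} [CommRing R] [SemilatticeSup X]

variable (R X) in
/-- A chain map, in level `k`, from lists to order chains. -/
def chainRetract (k : ℕ) : ListGrp R X →ₗ[R] ListGrp R X := strictPart R X k ∘ₗ retract R X k

lemma chainRetract_mem_supported (k : ℕ) {a : X} {c : ListGrp R X} (hc : c ∈ listFiltration R a) :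
    chainRetract R X k c ∈ supported R R
      {l | (∀ x ∈ l, x ≤ a) ∧ l.Pairwise (· > ·) ∧ l.length = k} :=
  mem_supported_mono (strictPart_mem_supported k (retract_mem_supported_pairwise_ge k hc))
    fun _ hl => ⟨(List.pairwise_cons.1 hl.1).1, hl.2⟩

lemma listBdry_chainRetract_succ (k : ℕ) {a : X} {c : ListGrp R X} (hc : c ∈ listFiltration R a) :
    listBdry (chainRetract R X (k + 1) c) = chainRetract R X k (listBdry c) := by
  have hge := retract_mem_supported_pairwise_ge (k + 1) hc
  simp only [chainRetract, LinearMap.comp_apply, ← listBdry_retract_succ]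
  exact listBdry_strictPart_succ k
    (mem_supported_mono hge fun _ hl => (List.pairwise_cons.1 hl).2)

lemma chainRetract_eq_zero_of_mem_degenerate (k : ℕ) {c : ListGrp R X} (hc : c ∈ degenerate R X) :
    chainRetract R X k c = 0 :=
  strictPart_eq_zero_of_mem_degenerate k (retract_mem_degenerate k hc)

lemma chainRetract_eq_self {k : ℕ} {c : ListGrp R X}
    (hc : c ∈ supported R R {l : List X | l.Pairwise (· > ·) ∧ l.length = k}) :
    chainRetract R X k c = c := by
  have hdeg := strictPart_eq_zero_of_mem_degenerate k (retract_sub_mem_degenerate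
    (mem_supported_mono hc fun _ hl => ⟨hl.1, hl.2.le⟩))
  rwa [map_sub, strictPart_eq_self hc, sub_eq_zero] at hdeg

variable {m : X} {k : ℕ}

lemma tailsAt_chainRetract_eq_zero {c : ListGrp R X}
    (hc : c ∈ filteredSum (listFiltration R) (¬ m ≤ ·)) :
    tailsAt R m (chainRetract R X k c) = 0 := by
  suffices h : filteredSum (listFiltration R) (¬ m ≤ ·) ≤
      LinearMap.ker (tailsAt R m ∘ₗ chainRetract R X k) from h hc
  exact iSup₂_le fun a ha c hc => tailsAt_eq_zero
    (mem_supported_mono (chainRetract_mem_supported k hc) fun _ hl hm => ha (hl.1 m hm))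

lemma exists_listBdry_eq_tailsAt_chainRetract {c : ListGrp R X} (hc : c ∈ relBoundaries R m) :
    ∃ y ∈ supported R R (chainsBelow m k),
      listBdry y = tailsAt R m (chainRetract R X k c) := by
  obtain ⟨_, hbl, δ, hδ, rfl⟩ := Submodule.mem_sup.1 hc
  obtain ⟨_, ⟨y, hy, rfl⟩, low, hlow, rfl⟩ := Submodule.mem_sup.1 hbl
  have hmem := chainRetract_mem_supported (k + 1) hy
  have htail := tailsAt_listBdry (mem_supported_mono hmem fun _ hl => ⟨hl.2.1, hl.1⟩)
  refine ⟨-tailsAt R m (chainRetract R X (k + 1) y), Submodule.neg_mem _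
    (tailsAt_mem_supported hmem fun l hl => ⟨hl.2.1, Nat.add_right_cancel hl.2.2⟩), ?_⟩
  rw [map_neg, ← htail, listBdry_chainRetract_succ k hy, map_add, map_add, map_add, map_add,
    tailsAt_chainRetract_eq_zero hlow, chainRetract_eq_zero_of_mem_degenerate k hδ, map_zero,
    add_zero, add_zero]

lemma exists_listBdry_eq_of_consMap_mem_relBoundaries {z : ListGrp R X}
    (hz : z ∈ supported R R (chainsBelow m k)) (hmz : consMap m z ∈ relBoundaries R m) :
    ∃ y ∈ supported R R (chainsBelow m (k + 1)), listBdry y = z := by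
  have hself : chainRetract R X (k + 1) (consMap m z) = consMap m z :=
    chainRetract_eq_self (consMap_mem_supported hz fun _ hl => ⟨hl.1, congrArg (· + 1) hl.2⟩)
  have h := exists_listBdry_eq_tailsAt_chainRetract (k := k + 1) hmz
  rwa [hself, tailsAt_consMap_self] at h

end RelativeCycles

section CutCycle

variable {R X : Type*} [CommRing R]

lemma rTensor_listBdry_cutMap_succ (p : ℕ) (c : ListGrp R X) :
    listBdry.rTensor _ (cutMap (p + 1) c) = cutMap p (listBdry c) := by
  suffices h : listBdry.rTensor _ ∘ₗ cutMap (p + 1) = cutMap p ∘ₗ listBdry (R := R) (X := X) from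
    LinearMap.congr_fun h c
  ext1 l
  ext1
  simpa only [LinearMap.comp_apply, lsingle_apply, cutMap_single, listBdry_single] using
    rTensor_listBdry_cut_succ p l

lemma lTensor_listBdry_cutMap_succ (p : ℕ) (c : ListGrp R X) :
    listBdry.lTensor _ (cutMap (p + 1) c) = 0 := by
  suffices h : listBdry.lTensor _ ∘ₗ cutMap (p + 1) = (0 : ListGrp R X →ₗ[R] _) from
    LinearMap.congr_fun h c
  ext1 l
  ext1
  simpa only [LinearMap.comp_apply, lsingle_apply, cutMap_single, LinearMap.zero_apply] using
    lTensor_listBdry_cut_succ p l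

lemma concatMap_cutMap_succ_sub_mem_degenerate {p : ℕ} {c : ListGrp R X}
    (hc : c ∈ supported R R {l : List X | p + 1 ≤ l.length}) :
    concatMap (cutMap (p + 1) c) - c ∈ degenerate R X :=
  map_mem_of_mem_supported (concatMap ∘ₗ cutMap (p + 1) - LinearMap.id) hc fun l hl => by
    simpa only [LinearMap.sub_apply, LinearMap.comp_apply, LinearMap.id_apply, cutMap_single] using
      concatMap_cut_succ_sub_mem_degenerate hl

variable [Preorder X]

lemma isFiltered_cutMap (p : ℕ) :
    IsFiltered (listFiltration R) (tensorSquare (listFiltration R))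
      (cutMap (R := R) (X := X) p) :=
  fun a _ hc => map_mem_of_mem_supported _ hc fun l hl => by
    rw [cutMap_single]
    refine Submodule.map₂_le_map₂ ?_ ?_ (cut_mem p l) <;>
    exact supported_mono fun k hk x hx => hl x (hk.1.subset hx)

lemma cutMap_mem_map₂_supported_pairwise_gt {p q : ℕ} {c : ListGrp R X}
    (hc : c ∈ supported R R {l : List X | l.Pairwise (· > ·) ∧ l.length = p + q}) :
    cutMap p c ∈ Submodule.map₂ (TensorProduct.mk R _ _)
      (supported R R {l : List X | l.Pairwise (· > ·) ∧ l.length = p})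
      (supported R R {l : List X | l.Pairwise (· > ·) ∧ l.length = q}) :=
  map_mem_of_mem_supported _ hc fun l hl => by
    rw [cutMap_single]
    refine Submodule.map₂_le_map₂ (supported_mono ?_) (supported_mono ?_) (cut_mem p l)
    · exact fun k hk => ⟨hl.1.sublist hk.1, hk.2⟩
    · exact fun k hk => ⟨hl.1.sublist hk.1,
        Nat.add_right_cancel (hk.2.trans (hl.2.trans (add_comm p q)))⟩

lemma supported_chainsBelow_succ_le_filteredSum {m : X} {k : ℕ} :
    supported R R (chainsBelow m (k + 1)) ≤ filteredSum (listFiltration R) (¬ m ≤ ·) := by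
  refine fun c hc => map_mem_of_mem_supported LinearMap.id hc ?_
  rintro (_ | ⟨x, l⟩) hl
  · cases hl.2
  · obtain ⟨hx, hl⟩ := cons_mem_chainsBelow_iff.1 hl
    refine le_filteredSum (F := listFiltration R) (p := (¬ m ≤ ·)) hx.not_ge ?_
    rw [LinearMap.id_apply, ← consMap_single]
    exact consMap_mem_listFiltration (supported_chainsBelow_le_listFiltration
      (single_mem_supported R 1 hl))

lemma isRelBicycle_cutMap_consMap {m : X} {k : ℕ} (p : ℕ) {z : ListGrp R X}
    (hz : z ∈ supported R R (chainsBelow m (k + 1))) (hdz : listBdry z = 0) :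
    IsRelBicycle m (cutMap (p + 1) (consMap m z)) where
  mem := isFiltered_cutMap _ _
    (consMap_mem_listFiltration (supported_chainsBelow_le_listFiltration hz))
  rTensor_listBdry_mem := by
    rw [rTensor_listBdry_cutMap_succ, listBdry_consMap, hdz, map_zero, sub_zero]
    exact (isFiltered_cutMap p).map_mem_filteredSum (supported_chainsBelow_succ_le_filteredSum hz)
  lTensor_listBdry_eq_zero := lTensor_listBdry_cutMap_succ p _

end CutCycle

section Subadditivity

variable {R X : Type*} [CommRing R] [SemilatticeSup X] {a b : ℕ} {m : X}

lemma concatMap_mem_filteredSum_of_mem_map₂ {p q : X → Prop}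
    (h : ∀ n₁ n₂, p n₁ → q n₂ → ¬ m ≤ n₁ ⊔ n₂) {t : ListGrp R X ⊗[R] ListGrp R X}
    (ht : t ∈ Submodule.map₂ (TensorProduct.mk R _ _) (filteredSum (listFiltration R) p)
      (filteredSum (listFiltration R) q)) :
    concatMap t ∈ filteredSum (listFiltration R) (¬ m ≤ ·) := by
  suffices hle : Submodule.map₂ (TensorProduct.mk R _ _) (filteredSum (listFiltration R) p)
      (filteredSum (listFiltration R) q) ≤ filteredSum (tensorSquare (listFiltration R))
        (¬ m ≤ ·) from isFiltered_concatMap.map_mem_filteredSum (hle ht)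
  refine map₂_filteredSum_le fun n₁ n₂ h₁ h₂ => ?_
  exact (Submodule.map₂_le_map₂ (listFiltration_mono le_sup_left)
    (listFiltration_mono le_sup_right)).trans (le_filteredSum
      (F := tensorSquare (listFiltration R)) (p := (¬ m ≤ ·)) (h n₁ n₂ h₁ h₂))

variable [WellFoundedLT X] {v : X → ListGrp R X →ₗ[R] ListGrp R X}

lemma consMap_mem_relBoundaries (hv : ∀ n, IsPartialContraction R n (v n))
    (h : ∀ n₁ n₂, ¬ ExactBelow R n₁ a → ¬ ExactBelow R n₂ b → ¬ m ≤ n₁ ⊔ n₂) {z : ListGrp R X}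
    (hz : z ∈ supported R R (chainsBelow m (a + b + 1))) (hdz : listBdry z = 0) :
    consMap m z ∈ relBoundaries R m := by
  let t := cutMap (a + 1) (consMap m z)
  let e := homotopyDefect (chainHomotopy v)
  have hmz : consMap m z ∈
      supported R R {l : List X | l.Pairwise (· > ·) ∧ l.length = (a + 1) + (b + 1)} :=
    consMap_mem_supported hz fun l hl => ⟨hl.1, by rw [List.length_cons, hl.2]; omega⟩
  have ht : IsRelBicycle m t := isRelBicycle_cutMap_consMap a hz hdz
  have het : concatMap (TensorProduct.map e e t) ∈ relBoundaries R m := by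
    refine filteredSum_le_relBoundaries (concatMap_mem_filteredSum_of_mem_map₂ h ?_)
    exact map_mem_of_mem_map₂_mk _ (cutMap_mem_map₂_supported_pairwise_gt hmz)
      fun x hx y hy => Submodule.apply_mem_map₂ _ (homotopyDefect_chainHomotopy_mem hv hx)
        (homotopyDefect_chainHomotopy_mem hv hy)
  have htdeg : concatMap t - consMap m z ∈ relBoundaries R m :=
    degenerate_le_relBoundaries (concatMap_cutMap_succ_sub_mem_degenerate
      (mem_supported_mono hmz fun l hl => (Nat.le_add_right _ _).trans_eq hl.2.symm))
  have hsub := ht.concatMap_sub_map_mem (isFiltered_chainHomotopy hv)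
  have hcat : concatMap t ∈ relBoundaries R m := by
    have hadd := Submodule.add_mem _ hsub het
    rwa [sub_add_cancel] at hadd
  simpa only [sub_sub_cancel] using Submodule.sub_mem _ hcat htdeg

theorem exists_not_exactBelow_le_sup {k : Type*} [Field k] (h : ¬ ExactBelow k m (a + b + 1)) :
    ∃ n₁ n₂, ¬ ExactBelow k n₁ a ∧ ¬ ExactBelow k n₂ b ∧ m ≤ n₁ ⊔ n₂ := by
  choose v hv using exists_isPartialContraction (k := k) (X := X)
  by_contra! hn
  exact h fun z hz hdz => exists_listBdry_eq_of_consMap_mem_relBoundaries hz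
    (consMap_mem_relBoundaries hv hn hz hdz)

end Subadditivity

section OrderComplex

lemma listFaces_ofFn {R X : Type*} [CommRing R] {n : ℕ} (c : Fin (n + 1) → X) :
    listFaces R (List.ofFn c) =
      ∑ k : Fin (n + 1), (-1 : R) ^ (k : ℕ) • single (List.ofFn (c ∘ k.succAbove)) 1 := by
  induction n with
  | zero => simp [listFaces]
  | succ n ih =>
    rw [List.ofFn_succ, listFaces, ih (fun i => c i.succ), Fin.sum_univ_succ (n := n + 1),
      sub_eq_add_neg, map_sum, ← Finset.sum_neg_distrib]
    congr 1
    · simp [Function.comp_def]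
    · refine Finset.sum_congr rfl fun k _ => ?_
      rw [List.ofFn_succ (f := c ∘ k.succ.succAbove)]
      simp [Function.comp_def, pow_succ]

variable {K} {P : Type} {X : Type*} [Preorder P] [Preorder X]

/-- The list of the images of the entries of an order chain under an embedding. -/
def chainList (ι : P ↪o X) (k : ℕ) (c : OChain P k) : List X := List.ofFn (ι ∘ c.1)

lemma chainList_injective (ι : P ↪o X) (k : ℕ) : Function.Injective (chainList ι k) :=
  fun _ _ h => Subtype.ext (ι.injective.comp_left (List.ofFn_injective h))

lemma range_chainList {ι : P ↪o X} {n : X} (hι : Set.range ι = Set.Iio n) (k : ℕ) :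
    Set.range (chainList ι k) = chainsBelow n k := by
  ext l
  constructor
  · rintro ⟨c, rfl⟩
    refine ⟨List.pairwise_cons.2 ⟨fun x hx => ?_, ?_⟩, List.length_ofFn⟩
    · obtain ⟨i, rfl⟩ := List.mem_ofFn.1 hx
      exact hι.le ⟨c.1 i, rfl⟩
    · exact List.pairwise_ofFn.2 fun i j hij => ι.lt_iff_lt.2 (c.2 hij)
  · rintro ⟨hl, rfl⟩
    obtain ⟨hlt, hl⟩ := List.pairwise_cons.1 hl
    choose c hc using fun i => hι.ge (hlt (l.get i) (l.get_mem i))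
    refine ⟨⟨c, fun i j hij => ?_⟩, ?_⟩
    · rw [← ι.lt_iff_lt, hc, hc]
      exact List.pairwise_iff_get.1 hl i j hij
    · exact (congrArg List.ofFn (funext hc)).trans (List.ofFn_get l)

variable (K) in
/-- The linear extension of `chainList`. -/
def chainListMap (ι : P ↪o X) (k : ℕ) : CGrp K P k →ₗ[K] ListGrp K X :=
  lmapDomain K K (chainList ι k)

lemma chainListMap_injective (ι : P ↪o X) (k : ℕ) : Function.Injective (chainListMap K ι k) :=
  mapDomain_injective (chainList_injective ι k)

lemma range_chainListMap {ι : P ↪o X} {n : X} (hι : Set.range ι = Set.Iio n) (k : ℕ) :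
    LinearMap.range (chainListMap K ι k) = supported K K (chainsBelow n k) := by
  rw [chainListMap, LinearMap.range_eq_map, ← supported_univ, lmapDomain_supported,
    Set.image_univ, range_chainList hι]

lemma listBdry_chainListMap (ι : P ↪o X) (k : ℕ) (c : CGrp K P (k + 1)) :
    listBdry (chainListMap K ι (k + 1) c) = chainListMap K ι k (cbdry K P k c) := by
  suffices h : listBdry ∘ₗ chainListMap K ι (k + 1) = chainListMap K ι k ∘ₗ cbdry K P k from
    LinearMap.congr_fun h c
  ext c : 2
  simp only [chainListMap, cbdry, LinearMap.comp_apply, lsingle_apply, lmapDomain_apply,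
    mapDomain_single, lsum_single, LinearMap.sum_apply, LinearMap.smul_apply,
    mapDomain_finsetSum, mapDomain_smul, listBdry_single]
  exact listFaces_ofFn _

lemma mem_cyclesAt_iff {ι : P ↪o X} {n : X} (hι : Set.range ι = Set.Iio n) {k : ℕ}
    {c : CGrp K P k} : c ∈ cyclesAt K P k ↔ listBdry (chainListMap K ι k c) = 0 := by
  cases k with
  | zero =>
    have hc : chainListMap K ι 0 c ∈ supported K K (chainsBelow n 0) :=
      range_chainListMap (K := K) hι 0 ▸ LinearMap.mem_range_self _ c
    exact iff_of_true Submodule.mem_top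
      (listBdry_eq_zero_of_mem_supported_length_zero (supported_chainsBelow_le hc))
  | succ k =>
    rw [listBdry_chainListMap, map_eq_zero_iff _ (chainListMap_injective ι k)]
    rfl

lemma mem_boundariesIn_iff {ι : P ↪o X} {n : X} (hι : Set.range ι = Set.Iio n) {k : ℕ}
    {c : CGrp K P k} : c ∈ boundariesIn K P k ↔
      ∃ y ∈ supported K K (chainsBelow n (k + 1)), listBdry y = chainListMap K ι k c := by
  rw [← range_chainListMap hι]
  simp only [boundariesIn, LinearMap.mem_range, exists_exists_eq_and, listBdry_chainListMap,
    (chainListMap_injective ι k).eq_iff]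

lemma rHomNontrivial_iff_not_exactBelow {ι : P ↪o X} {n : X} (hι : Set.range ι = Set.Iio n)
    (k : ℕ) : RHomNontrivial K P k ↔ ¬ ExactBelow K n k := by
  simp only [RHomNontrivial, ExactBelow, SetLike.le_def, mem_cyclesAt_iff hι,
    mem_boundariesIn_iff hι, ← range_chainListMap hι k, LinearMap.mem_range,
    forall_exists_index, forall_apply_eq_imp_iff]

lemma RHomNontrivial.nonempty {k : ℕ} (h : RHomNontrivial K P (k + 1)) : Nonempty P := by
  by_contra hP
  rw [not_nonempty_iff] at hP
  have : IsEmpty (OChain P (k + 1)) := ⟨fun c => hP.elim (c.1 0)⟩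
  exact h fun c _ => Subsingleton.elim 0 c ▸ Submodule.zero_mem _

end OrderComplex

section Interval

variable {K} {L : Type} [PartialOrder L] [OrderBot L]

/-- The open interval `(⊥, n)`, embedded into the elements above `⊥`. -/
def iooEmbedding (n : L) : Set.Ioo ⊥ n ↪o Set.Ioi (⊥ : L) :=
  Subtype.orderEmbedding fun _ hx => hx.1

lemma range_iooEmbedding (n : Set.Ioi (⊥ : L)) :
    Set.range (iooEmbedding n.1) = Set.Iio n := by
  ext x
  exact ⟨fun ⟨y, hy⟩ => hy ▸ y.2.2, fun hx => ⟨⟨x, x.2, hx⟩, rfl⟩⟩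

lemma rHomNontrivial_Ioo_iff_not_exactBelow (n : Set.Ioi (⊥ : L)) (k : ℕ) :
    RHomNontrivial K (Set.Ioo ⊥ n.1) k ↔ ¬ ExactBelow K n k :=
  rHomNontrivial_iff_not_exactBelow (range_iooEmbedding n) k

end Interval

theorem subadditivity_homology_lattice_general {L : Type} [SemilatticeSup L] [OrderBot L]
    [WellFoundedLT L] (a b : ℕ) (m : L)
    (hm : RHomNontrivial K (Set.Ioo ⊥ m) (a + b + 1)) :
    ∃ n₁ n₂ : L, RHomNontrivial K (Set.Ioo ⊥ n₁) a ∧ RHomNontrivial K (Set.Ioo ⊥ n₂) b ∧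
      m ≤ n₁ ⊔ n₂ := by
  obtain ⟨x, hx⟩ := hm.nonempty
  have hbot : ⊥ < m := hx.1.trans hx.2
  obtain ⟨n₁, n₂, h₁, h₂, hle⟩ := exists_not_exactBelow_le_sup
    ((rHomNontrivial_Ioo_iff_not_exactBelow (⟨m, hbot⟩ : Set.Ioi ⊥) _).1 hm)
  exact ⟨n₁, n₂, (rHomNontrivial_Ioo_iff_not_exactBelow n₁ a).2 h₁,
    (rHomNontrivial_Ioo_iff_not_exactBelow n₂ b).2 h₂, hle⟩


/-- Let `L` be a finite lattice with minimum element `0̂ = ⊥` and let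
`i₁, i₂ ≥ 1`.  If there is `m ∈ L` with `H̃_{i₁+i₂-2}((0̂, m)) ≠ 0` (reduced simplicial
homology with coefficients in the field `K` of the order complex of the open interval;
degree `d` corresponds to level `d + 1`), then there exist `n₁, n₂ ∈ L` with
`H̃_{i₁-2}((0̂, n₁)) ≠ 0`, `H̃_{i₂-2}((0̂, n₂)) ≠ 0` and `n₁ ⊔ n₂ ≥ m`. -/
theorem subadditivity_homology_lattice
    (L : Type) [Lattice L] [OrderBot L] [Fintype L]
    (i₁ i₂ : ℕ) (hi₁ : 1 ≤ i₁) (hi₂ : 1 ≤ i₂) (m : L)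
    (hm : RHomNontrivial K ↥(Set.Ioo (⊥ : L) m) (i₁ + i₂ - 1)) :
    ∃ n₁ n₂ : L,
      RHomNontrivial K ↥(Set.Ioo (⊥ : L) n₁) (i₁ - 1) ∧
      RHomNontrivial K ↥(Set.Ioo (⊥ : L) n₂) (i₂ - 1) ∧
      m ≤ n₁ ⊔ n₂ := by
  refine subadditivity_homology_lattice_general K (i₁ - 1) (i₂ - 1) m ?_
  rwa [show i₁ - 1 + (i₂ - 1) + 1 = i₁ + i₂ - 1 by omega]

end
end

section
/- For integers i, j ≥ 0, let τ_ℓ denote the transposition of ℓ−1 and ℓ in the symmetric group on {0,…,i+j+1}, and define T_{i,j} : A₁^{i,j} → A₂^{i,j} by T_{i,j}(ℓ,σ) = (ℓ, σ∘τ_ℓ). Then: (i) T_{i,j} is a bijection from A₁^{i,j} onto A₂^{i,j}; (ii) sgn(σ∘τ_ℓ) = −sgn(σ) for every permutation σ of {0,…,i+j+1} and every ℓ ≥ 1; (iii) for every i-multichain c = (c₀ ≥ … ≥ c_i), every j-multichain c′ = (c_{i+1} ≥ … ≥ c_{i+j+1}) in a finite lattice L, and every (ℓ,σ) ∈ A₁^{i,j},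 one has ∂_{i+j+1}^{(ℓ)}[τ((c·c′)_σ)] = ∂_{i+j+1}^{(ℓ)}[τ((c·c′)_{σ∘τ_ℓ})]. -/
open Finsupp

noncomputable section

variable (K : Type) [Field K] (L : Type) [SemilatticeSup L]

/-- Order multichains with `n` entries (length `n - 1`) in the lattice `L`:
weakly decreasing tuples `(c₀ ≥ c₁ ≥ ⋯ ≥ c_{n-1})`. -/
def MChain (n : ℕ) : Type := {c : Fin n → L // Antitone c}

/-- `∂ₖ^{(j)}`: deletion of the `k`-th entry of an order multichain. -/
def mdel {n : ℕ} (k : Fin (n + 1)) (c : MChain L (n + 1)) : MChain L n :=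
  ⟨c.1 ∘ k.succAbove, c.2.comp_monotone (Fin.strictMono_succAbove k).monotone⟩

/-- Concatenation `c · c′` of tuples. -/
def concatT {a b n : ℕ} (h : a + b = n) (u : Fin a → L) (v : Fin b → L) : Fin n → L :=
  fun r => if hr : (r : ℕ) < a then u ⟨r, hr⟩ else v ⟨(r : ℕ) - a, by have := r.2; omega⟩

/-- The operator `τ` sending a tuple `(a₀, …, a_{n-1})` to the multichain
`(a₀ ∨ ⋯ ∨ a_{n-1} ≥ a₁ ∨ ⋯ ∨ a_{n-1} ≥ ⋯ ≥ a_{n-1})` of suffix joins. -/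
def tauMul {n : ℕ} (a : Fin n → L) : MChain L n :=
  ⟨fun r => (Finset.Ici r).sup' ⟨r, Finset.mem_Ici.mpr le_rfl⟩ a, by
    intro r r' hrr'
    apply Finset.sup'_le
    intro s hs
    exact Finset.le_sup' _ (Finset.mem_Ici.mpr (le_trans hrr' (Finset.mem_Ici.mp hs)))⟩

/-- An `(i,j)`-shuffle, in block form: `IsShuffleBlocks t σ` says that the permutation `σ`
is monotone on the preimage of the values `{0, …, t-1}` (the first block) and on the
preimage of the remaining values (the second block).  An `(i,j)`-shuffle of
`{0, 1, …, i+j+1}` is exactly `IsShuffleBlocks (i+1)`. -/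
def IsShuffleBlocks {n : ℕ} (t : ℕ) (σ : Equiv.Perm (Fin n)) : Prop :=
  (∀ p q : Fin n, p < q → (σ p : ℕ) < t → (σ q : ℕ) < t → σ p < σ q) ∧
  (∀ p q : Fin n, p < q → t ≤ (σ p : ℕ) → t ≤ (σ q : ℕ) → σ p < σ q)

/-- The index `ℓ - 1` (with the convention `0 - 1 = 0`). -/
def prevIdx {n : ℕ} (ℓ : Fin n) : Fin n := ⟨(ℓ : ℕ) - 1, by have := ℓ.2; omega⟩

/-- The set `A₁^{i,j}` of pairs `(ℓ, σ)` with `σ` an `(i,j)`-shuffle, `ℓ ≥ 1`,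
`σ(ℓ-1) ∈ {0,…,i}` and `σ(ℓ) ∈ {i+1,…,i+j+1}`. -/
def shuffleA1 (i j : ℕ) : Set (Fin (i + j + 2) × Equiv.Perm (Fin (i + j + 2))) :=
  {p | IsShuffleBlocks (i + 1) p.2 ∧ 1 ≤ (p.1 : ℕ) ∧
       (p.2 (prevIdx p.1) : ℕ) ≤ i ∧ i + 1 ≤ (p.2 p.1 : ℕ)}

/-- The set `A₂^{i,j}` of pairs `(ℓ, σ)` with `σ` an `(i,j)`-shuffle, `ℓ ≥ 1`,
`σ(ℓ-1) ∈ {i+1,…,i+j+1}` and `σ(ℓ) ∈ {0,…,i}`. -/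
def shuffleA2 (i j : ℕ) : Set (Fin (i + j + 2) × Equiv.Perm (Fin (i + j + 2))) :=
  {p | IsShuffleBlocks (i + 1) p.2 ∧ 1 ≤ (p.1 : ℕ) ∧
       i + 1 ≤ (p.2 (prevIdx p.1) : ℕ) ∧ (p.2 p.1 : ℕ) ≤ i}

/-- The set `A₃^{i,j}` of pairs `(ℓ, σ)` with `σ` an `(i,j)`-shuffle and
`σ(ℓ-1), σ(ℓ) ∈ {0,…,i}`, the condition on `σ(ℓ-1)` being regarded as true for `ℓ = 0`. -/
def shuffleA3 (i j : ℕ) : Set (Fin (i + j + 2) × Equiv.Perm (Fin (i + j + 2))) :=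
  {p | IsShuffleBlocks (i + 1) p.2 ∧
       (1 ≤ (p.1 : ℕ) → (p.2 (prevIdx p.1) : ℕ) ≤ i) ∧ (p.2 p.1 : ℕ) ≤ i}

/-!
Two positions `k ⋖ l` are compared in the same way with every third position, so transposing them
reverses no order relation except the one between `k` and `l`. Hence the transposition preserves
shuffles whenever the values at `k` and `l` lie in different blocks, and it stabilizes every up-set
`{s | r ≤ s}` with `r ≠ l`, so the suffix joins at all positions other than the deleted one agree.
-/

section CovBy

variable {α : Type*} [LinearOrder α] {k l : α}

theorem swap_lt_swap_of_covBy (h : k ⋖ l) {p q : α} (hpq : p < q) (hne : ¬(p = k ∧ q = l)) :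
    Equiv.swap k l p < Equiv.swap k l q := by
  have below : ∀ x, x < l → x ≤ k := fun _ => h.le_of_lt
  have above : ∀ x, k < x → l ≤ x := fun _ => h.ge_of_gt
  grind [h.lt]

theorem le_swap_iff_of_covBy (h : k ⋖ l) {r : α} (hr : r ≠ l) (s : α) :
    r ≤ Equiv.swap k l s ↔ r ≤ s := by
  have hkl : r ≤ k ↔ r ≤ l :=
    ⟨fun hrk => hrk.trans h.le, fun hrl => h.le_of_lt (hrl.lt_of_ne hr)⟩
  rw [Equiv.swap_apply_def]
  split_ifs with hsk hsl
  · rw [hsk, hkl]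
  · rw [hsl, hkl]
  · rfl

theorem map_swap_Ici_of_covBy [LocallyFiniteOrderTop α] (h : k ⋖ l) {r : α} (hr : r ≠ l) :
    (Finset.Ici r).map (Equiv.swap k l).toEmbedding = Finset.Ici r := by
  ext s
  rw [Finset.mem_map_equiv, Equiv.symm_swap, Finset.mem_Ici, Finset.mem_Ici,
    le_swap_iff_of_covBy h hr]

end CovBy

section SuffixJoins

variable {L}

theorem tauMul_comp_swap_apply {n : ℕ} (a : Fin n → L) {k l r : Fin n} (h : k ⋖ l) (hr : r ≠ l) :
    (tauMul L (a ∘ Equiv.swap k l)).1 r = (tauMul L a).1 r :=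
  calc
    (Finset.Ici r).sup' Finset.nonempty_Ici (a ∘ Equiv.swap k l)
      = ((Finset.Ici r).map (Equiv.swap k l).toEmbedding).sup' Finset.nonempty_Ici.map a :=
        (Finset.sup'_map (f := (Equiv.swap k l).toEmbedding) a _).symm
    _ = (Finset.Ici r).sup' Finset.nonempty_Ici a := by
        simp only [map_swap_Ici_of_covBy h hr]

theorem mdel_tauMul_comp_swap {n : ℕ} (a : Fin (n + 1) → L) {k l : Fin (n + 1)} (h : k ⋖ l) :
    mdel L l (tauMul L (a ∘ Equiv.swap k l)) = mdel L l (tauMul L a) :=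
  Subtype.ext <| funext fun r => tauMul_comp_swap_apply a h (Fin.succAbove_ne l r)

end SuffixJoins

section Shuffles

theorem isShuffleBlocks_iff_lt_of_same_block {n t : ℕ} {σ : Equiv.Perm (Fin n)} :
    IsShuffleBlocks t σ ↔
      ∀ p q : Fin n, p < q → ((σ p : ℕ) < t ↔ (σ q : ℕ) < t) → σ p < σ q := by
  simp only [IsShuffleBlocks, ← not_lt]
  grind

theorem IsShuffleBlocks.mul_swap {n t : ℕ} {σ : Equiv.Perm (Fin n)} (hσ : IsShuffleBlocks t σ)
    {k l : Fin n} (h : k ⋖ l) (hblock : ¬((σ k : ℕ) < t ↔ (σ l : ℕ) < t)) :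
    IsShuffleBlocks t (σ * Equiv.swap k l) := by
  rw [isShuffleBlocks_iff_lt_of_same_block] at hσ ⊢
  intro p q hpq hsame
  refine hσ _ _ (swap_lt_swap_of_covBy h hpq ?_) hsame
  rintro ⟨rfl, rfl⟩
  simp only [Equiv.Perm.mul_apply, Equiv.swap_apply_left, Equiv.swap_apply_right] at hsame
  exact hblock hsame.symm

theorem prevIdx_covBy {n : ℕ} {l : Fin n} (hl : 1 ≤ (l : ℕ)) : prevIdx l ⋖ l := by
  rw [Fin.covBy_iff, Nat.covBy_iff_add_one_eq]
  exact Nat.sub_add_cancel hl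

/-- The map `T_{i,j}`, `(ℓ, σ) ↦ (ℓ, σ ∘ τ_ℓ)`, extended to all pairs of a position and a
permutation; since `prevIdx 0 = 0`, it fixes the pairs with `ℓ = 0`. -/
def transposePrev {n : ℕ} (p : Fin n × Equiv.Perm (Fin n)) : Fin n × Equiv.Perm (Fin n) :=
  (p.1, p.2 * Equiv.swap (prevIdx p.1) p.1)

theorem transposePrev_involutive {n : ℕ} : Function.Involutive (transposePrev (n := n)) :=
  fun p => Prod.ext rfl (Equiv.mul_swap_involutive (prevIdx p.1) p.1 p.2)

variable {i j : ℕ}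

theorem mapsTo_transposePrev_shuffleA1 :
    Set.MapsTo transposePrev (shuffleA1 i j) (shuffleA2 i j) := by
  rintro ⟨l, σ⟩ ⟨hσ, hl, hprev, hcur⟩
  have hblock : ¬((σ (prevIdx l) : ℕ) < i + 1 ↔ (σ l : ℕ) < i + 1) := by grind
  refine ⟨hσ.mul_swap (prevIdx_covBy hl) hblock, hl, ?_, ?_⟩
  · simpa [transposePrev] using hcur
  · simpa [transposePrev] using hprev

theorem mapsTo_transposePrev_shuffleA2 :
    Set.MapsTo transposePrev (shuffleA2 i j) (shuffleA1 i j) := by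
  rintro ⟨l, σ⟩ ⟨hσ, hl, hprev, hcur⟩
  have hblock : ¬((σ (prevIdx l) : ℕ) < i + 1 ↔ (σ l : ℕ) < i + 1) := by grind
  refine ⟨hσ.mul_swap (prevIdx_covBy hl) hblock, hl, ?_, ?_⟩
  · simpa [transposePrev] using hcur
  · simpa [transposePrev] using hprev

theorem bijOn_transposePrev : Set.BijOn transposePrev (shuffleA1 i j) (shuffleA2 i j) :=
  Set.InvOn.bijOn
    ⟨transposePrev_involutive.leftInverse.leftInvOn _,
      transposePrev_involutive.rightInverse.rightInvOn _⟩
    mapsTo_transposePrev_shuffleA1 mapsTo_transposePrev_shuffleA2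

end Shuffles

theorem sign_mul_swap {α : Type*} [Fintype α] [DecidableEq α] (σ : Equiv.Perm α) {k l : α}
    (h : k ≠ l) : Equiv.Perm.sign (σ * Equiv.swap k l) = -Equiv.Perm.sign σ := by
  rw [Equiv.Perm.sign_mul, Equiv.Perm.sign_swap h, mul_neg_one]

theorem transposition_bijection_A1_A2_general (i j : ℕ) :
    Set.BijOn (fun p : Fin (i + j + 2) × Equiv.Perm (Fin (i + j + 2)) =>
        (p.1, p.2 * Equiv.swap (prevIdx p.1) p.1)) (shuffleA1 i j) (shuffleA2 i j) ∧
    (∀ (σ : Equiv.Perm (Fin (i + j + 2))) (ℓ : Fin (i + j + 2)), 1 ≤ (ℓ : ℕ) →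
        Equiv.Perm.sign (σ * Equiv.swap (prevIdx ℓ) ℓ) = -Equiv.Perm.sign σ) ∧
    (∀ (a : Fin (i + j + 2) → L) (σ : Equiv.Perm (Fin (i + j + 2))) (ℓ : Fin (i + j + 2)),
        1 ≤ (ℓ : ℕ) →
        mdel L ℓ (tauMul L (a ∘ σ)) =
        mdel L ℓ (tauMul L (a ∘ ⇑(σ * Equiv.swap (prevIdx ℓ) ℓ)))) :=
  ⟨bijOn_transposePrev,
    fun σ _ hℓ => sign_mul_swap σ (prevIdx_covBy hℓ).ne,
    fun a σ _ hℓ => (mdel_tauMul_comp_swap (a ∘ σ) (prevIdx_covBy hℓ)).symm⟩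

/-- For `i, j ≥ 0` let `τ_ℓ` be the transposition of `ℓ-1` and `ℓ` and
let `T_{i,j}(ℓ, σ) = (ℓ, σ ∘ τ_ℓ)`.  Then
(i) `T_{i,j}` is a bijection from `A₁^{i,j}` onto `A₂^{i,j}`;
(ii) `sgn(σ ∘ τ_ℓ) = - sgn(σ)` for every permutation `σ` of `{0,…,i+j+1}` and `ℓ ≥ 1`;
(iii) for all multichains `c = (c₀ ≥ ⋯ ≥ c_i)`, `c′ = (c_{i+1} ≥ ⋯ ≥ c_{i+j+1})` in the
finite lattice `L` and every `(ℓ, σ) ∈ A₁^{i,j}`,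
`∂_{i+j+1}^{(ℓ)}[τ((c·c′)_σ)] = ∂_{i+j+1}^{(ℓ)}[τ((c·c′)_{σ∘τ_ℓ})]`. -/
theorem transposition_bijection_A1_A2 [Fintype L] (i j : ℕ) :
    (Set.BijOn (fun p : Fin (i + j + 2) × Equiv.Perm (Fin (i + j + 2)) =>
        (p.1, p.2 * Equiv.swap (prevIdx p.1) p.1)) (shuffleA1 i j) (shuffleA2 i j)) ∧
    (∀ (σ : Equiv.Perm (Fin (i + j + 2))) (ℓ : Fin (i + j + 2)), 1 ≤ (ℓ : ℕ) →
        Equiv.Perm.sign (σ * Equiv.swap (prevIdx ℓ) ℓ) = - Equiv.Perm.sign σ) ∧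
    (∀ (c : MChain L (i + 1)) (c' : MChain L (j + 1))
        (p : Fin (i + j + 2) × Equiv.Perm (Fin (i + j + 2))), p ∈ shuffleA1 i j →
        mdel L p.1 (tauMul L (concatT L (by omega) c.1 c'.1 ∘ ⇑p.2)) =
        mdel L p.1 (tauMul L (concatT L (by omega) c.1 c'.1 ∘
          ⇑(p.2 * Equiv.swap (prevIdx p.1) p.1)))) := by
  obtain ⟨hbij, hsign, hdel⟩ := transposition_bijection_A1_A2_general L i j
  exact ⟨hbij, hsign, fun _ _ p hp => hdel _ p.2 p.1 hp.2.1⟩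

end
end

section
/- For integers i, j ≥ 0: (i) the relation φ ∘ ∂_{i+j+1}^{(m)} = ∂_{i+j+1}^{(ℓ)} ∘ σ, as maps on (i+j+2)-tuples (where ∂^{(k)} deletes the k-th entry and a permutation π sends a tuple a to a_π), determines a well-defined map Ω_{i,j} : A₃^{i,j} → {0,…,i} × S_{i−1,j} with Ω_{i,j}(ℓ,σ) = (m,φ), and Ω_{i,j} is a bijection; (ii) whenever Ω_{i,j}(ℓ,σ) = (m,φ), one has (−1)^ℓ sgn(σ) = (−1)^m sgn(φ); (iii) for every i-multichain c = (c₀ ≥ … ≥ c_i) and j-multichain c′ = (c_{i+1} ≥ … ≥ c_{i+j+1}) in a finite lattice L, and every (ℓ,σ) ∈ A₃^{i,j} with Ω_{i,j}(ℓ,σ) = (m,φ), one has ∂_{i+j+1}^{(ℓ)}[τ((c·c′)_σ)] = τ(∂_{i+j+1}^{(ℓ)}[(c·c′)_σ]) = τ((∂_{i+j+1}^{(m)}(c·c′))_φ). -/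
open Finsupp

noncomputable section

variable (K : Type) [Field K] (L : Type) [SemilatticeSup L]

/-- The defining relation of `Ω_{i,j}`: `φ ∘ ∂_{i+j+1}^{(m)} = ∂_{i+j+1}^{(ℓ)} ∘ σ` as maps
on `(i+j+2)`-tuples, where `∂^{(k)}` deletes the `k`-th entry and a permutation `π` sends a
tuple `a` to `a_π = a ∘ π`.  Applied to a tuple `a` this reads
`a ∘ (m.succAbove ∘ φ) = a ∘ (σ ∘ ℓ.succAbove)`, so the relation is equivalent to the
following equality of index maps. -/
def omegaRel (i j : ℕ) (ℓ : Fin (i + j + 2)) (σ : Equiv.Perm (Fin (i + j + 2)))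
    (m : Fin (i + 1)) (φ : Equiv.Perm (Fin (i + j + 1))) : Prop :=
  (Fin.castLE (by omega) m).succAbove ∘ ⇑φ = ⇑σ ∘ ℓ.succAbove

/-!
Write `φ⁺` for the permutation of `{0, …, n}` fixing `0` and sending `k + 1` to `φ(k) + 1`.
The relation `φ ∘ ∂^{(m)} = ∂^{(ℓ)} ∘ σ` says that `σ` arises from `φ` by inserting the entry
`m` at position `ℓ`, i.e. `σ = γ_m⁻¹ φ⁺ γ_ℓ` with `γ_r` the cycle `(0 1 ⋯ r)`; this gives the
signs.  If `(ℓ, σ) ∈ A₃` with `ℓ ≥ 1`, the entries `σ(ℓ-1), σ(ℓ)` are neighbours in the first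
block and hence consecutive, so `m = σ(ℓ) = σ(ℓ-1) + 1 = φ(ℓ-1) + 1`; for `ℓ = 0` one gets
`m = 0`.  Thus, for a shuffle `φ` and `m ≤ i`, membership in `A₃` amounts to `m = φ⁺(ℓ)`, which
has exactly one solution `ℓ`.  The same neighbours satisfy `c_{σ(ℓ)} ≤ c_{σ(ℓ-1)}`, so the
`ℓ`-th entry contributes nothing to the suffix joins starting at other positions.
-/

section PermInsert

variable {n : ℕ}

/-- The permutation `φ⁺` of `Fin (n + 1)` that fixes `0` and acts as `φ` on successors. -/
def succPerm (φ : Equiv.Perm (Fin n)) : Equiv.Perm (Fin (n + 1)) :=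
  Equiv.Perm.decomposeFin.symm (0, φ)

@[simp]
theorem succPerm_zero (φ : Equiv.Perm (Fin n)) : succPerm φ 0 = 0 :=
  Equiv.Perm.decomposeFin_symm_apply_zero 0 φ

@[simp]
theorem succPerm_succ (φ : Equiv.Perm (Fin n)) (k : Fin n) : succPerm φ k.succ = (φ k).succ := by
  simp [succPerm]

@[simp]
theorem sign_succPerm (φ : Equiv.Perm (Fin n)) :
    Equiv.Perm.sign (succPerm φ) = Equiv.Perm.sign φ := by
  simp [succPerm]

/-- The permutation whose word is that of `φ`, with the values `≥ m` raised by one, and with the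
letter `m` inserted at position `ℓ`. -/
def permInsert (ℓ m : Fin (n + 1)) (φ : Equiv.Perm (Fin n)) : Equiv.Perm (Fin (n + 1)) :=
  m.cycleRange⁻¹ * succPerm φ * ℓ.cycleRange

@[simp]
theorem permInsert_apply_self (ℓ m : Fin (n + 1)) (φ : Equiv.Perm (Fin n)) :
    permInsert ℓ m φ ℓ = m := by
  simp [permInsert, Equiv.Perm.inv_def]

@[simp]
theorem permInsert_apply_succAbove (ℓ m : Fin (n + 1)) (φ : Equiv.Perm (Fin n)) (k : Fin n) :
    permInsert ℓ m φ (ℓ.succAbove k) = m.succAbove (φ k) := by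
  simp [permInsert, Equiv.Perm.inv_def]

theorem sign_permInsert (ℓ m : Fin (n + 1)) (φ : Equiv.Perm (Fin n)) :
    Equiv.Perm.sign (permInsert ℓ m φ) =
      (-1) ^ (m : ℕ) * Equiv.Perm.sign φ * (-1) ^ (ℓ : ℕ) := by
  simp [permInsert]

theorem permInsert_comp_succAbove (ℓ m : Fin (n + 1)) (φ : Equiv.Perm (Fin n)) :
    permInsert ℓ m φ ∘ ℓ.succAbove = m.succAbove ∘ φ :=
  funext (permInsert_apply_succAbove ℓ m φ)

theorem succAbove_comp_perm_inj {m m' : Fin (n + 1)} {φ φ' : Equiv.Perm (Fin n)} :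
    m.succAbove ∘ φ = m'.succAbove ∘ φ' ↔ m = m' ∧ φ = φ' := by
  refine ⟨fun h => ?_, by rintro ⟨rfl, rfl⟩; rfl⟩
  obtain rfl : m = m' := by
    simpa only [EquivLike.range_comp, Fin.range_succAbove, compl_inj_iff,
      Set.singleton_eq_singleton_iff] using congrArg Set.range h
  exact ⟨rfl, DFunLike.coe_injective (Fin.succAbove_right_injective.comp_left h)⟩

theorem permInsert_bijective (ℓ : Fin (n + 1)) :
    Function.Bijective fun mφ : Fin (n + 1) × Equiv.Perm (Fin n) => permInsert ℓ mφ.1 mφ.2 := by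
  rw [Fintype.bijective_iff_injective_and_card]
  constructor
  · rintro ⟨m, φ⟩ ⟨m', φ'⟩ h
    have hcomp : permInsert ℓ m φ ∘ ℓ.succAbove = permInsert ℓ m' φ' ∘ ℓ.succAbove :=
      congrArg (fun σ : Equiv.Perm (Fin (n + 1)) => σ ∘ ℓ.succAbove) h
    rw [permInsert_comp_succAbove, permInsert_comp_succAbove, succAbove_comp_perm_inj] at hcomp
    exact Prod.ext hcomp.1 hcomp.2
  · simp only [Fintype.card_prod, Fintype.card_perm, Fintype.card_fin, Nat.factorial_succ]

theorem succAbove_comp_eq_comp_succAbove_iff {ℓ m : Fin (n + 1)}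
    {σ : Equiv.Perm (Fin (n + 1))} {φ : Equiv.Perm (Fin n)} :
    m.succAbove ∘ φ = σ ∘ ℓ.succAbove ↔ permInsert ℓ m φ = σ := by
  obtain ⟨⟨m', φ'⟩, rfl⟩ := (permInsert_bijective ℓ).surjective σ
  rw [permInsert_comp_succAbove, succAbove_comp_perm_inj]
  rw [← Prod.mk_inj]
  exact ((permInsert_bijective ℓ).injective.eq_iff (a := (m, φ)) (b := (m', φ'))).symm

end PermInsert

section Shuffle

variable {n t : ℕ} {ℓ m : Fin (n + 1)} {φ : Equiv.Perm (Fin n)}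

theorem isShuffleBlocks_iff :
    IsShuffleBlocks t φ ↔
      ∀ p q : Fin n, p < q → ((φ p : ℕ) < t ↔ (φ q : ℕ) < t) → φ p < φ q := by
  refine ⟨fun h p q hpq hblock => ?_, fun h => ⟨fun p q hpq hp hq => ?_, fun p q hpq hp hq => ?_⟩⟩
  · by_cases hp : (φ p : ℕ) < t
    · exact h.1 p q hpq hp (hblock.mp hp)
    · exact h.2 p q hpq (not_lt.mp hp) (not_lt.mp (mt hblock.mpr hp))
  · exact h p q hpq (iff_of_true hp hq)
  · exact h p q hpq (iff_of_false hp.not_gt hq.not_gt)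

theorem IsShuffleBlocks.le_iff_le (hφ : IsShuffleBlocks t φ) {p q : Fin n}
    (hp : (φ p : ℕ) < t) (hq : (φ q : ℕ) < t) : φ p ≤ φ q ↔ p ≤ q := by
  have hmono : StrictMonoOn φ {r | (φ r : ℕ) < t} := fun p hp q hq hpq => hφ.1 p q hpq hp hq
  exact hmono.le_iff_le hp hq

theorem val_succAbove_lt_succ_iff (hm : (m : ℕ) ≤ t) (v : Fin n) :
    (m.succAbove v : ℕ) < t + 1 ↔ (v : ℕ) < t := by
  rcases lt_or_ge v.castSucc m with h | h
  · rw [Fin.succAbove_of_castSucc_lt m v h, Fin.val_castSucc]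
    rw [Fin.lt_def, Fin.val_castSucc] at h
    omega
  · rw [Fin.succAbove_of_le_castSucc m v h, Fin.val_succ, Nat.add_lt_add_iff_right]

/-- The first-block letters of `φ` to the left of position `ℓ` are exactly those below `m`, so
that inserting `m` at `ℓ` keeps the first block increasing. -/
def FitsFirstBlock (t : ℕ) (φ : Equiv.Perm (Fin n)) (ℓ m : Fin (n + 1)) : Prop :=
  ∀ k, (φ k : ℕ) < t → (k.castSucc < ℓ ↔ (φ k).castSucc < m)

theorem isShuffleBlocks_permInsert_iff (hm : (m : ℕ) ≤ t) :
    IsShuffleBlocks (t + 1) (permInsert ℓ m φ) ↔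
      IsShuffleBlocks t φ ∧ FitsFirstBlock t φ ℓ m := by
  have hm' : (m : ℕ) < t + 1 := Nat.lt_succ_of_le hm
  -- Pairs of positions split into those starting at `ℓ`, those ending at `ℓ` and those avoiding it.
  simp only [isShuffleBlocks_iff, FitsFirstBlock, Fin.forall_iff_succAbove ℓ,
    permInsert_apply_self, permInsert_apply_succAbove, val_succAbove_lt_succ_iff hm,
    Fin.succAbove_lt_succAbove_iff, Fin.lt_succAbove_iff_le_castSucc,
    Fin.succAbove_lt_iff_castSucc_lt, hm', true_iff, iff_true, lt_irrefl, false_imp_iff, true_and]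
  constructor
  · rintro ⟨hright, hφ⟩
    refine ⟨fun p => (hφ p).2, fun k hk => ⟨fun h => (hφ k).1 h hk, fun h => ?_⟩⟩
    by_contra hle
    exact (hright k (not_lt.mp hle) hk).not_gt h
  · rintro ⟨hφ, hfit⟩
    exact ⟨fun k hle hk => not_lt.mp (mt (hfit k hk).mpr hle.not_gt),
      fun k => ⟨fun hlt hk => (hfit k hk).mp hlt, hφ k⟩⟩

theorem fitsFirstBlock_zero_iff (hm : (m : ℕ) ≤ t) : FitsFirstBlock t φ 0 m ↔ m = 0 := by
  refine ⟨fun hfit => ?_, by rintro rfl; simp [FitsFirstBlock]⟩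
  cases m using Fin.cases with
  | zero => rfl
  | succ r =>
    have hr : (φ (φ.symm r) : ℕ) < t := by simpa [Nat.succ_le_iff] using hm
    simpa using hfit (φ.symm r) hr

theorem fitsFirstBlock_succ_iff (hφ : IsShuffleBlocks t φ) (hm : (m : ℕ) ≤ t) {k : Fin n}
    (hk : (φ k : ℕ) < t) : FitsFirstBlock t φ k.succ m ↔ m = (φ k).succ := by
  simp only [FitsFirstBlock, Fin.castSucc_lt_succ_iff]
  constructor
  · intro hfit
    have hlt : (φ k).castSucc < m := (hfit k hk).mp le_rfl
    cases m using Fin.cases with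
    | zero => exact absurd hlt (Fin.not_lt_zero _)
    | succ r =>
      have hr : (φ (φ.symm r) : ℕ) < t := by simpa [Nat.succ_le_iff] using hm
      have hrk : φ.symm r ≤ k := (hfit _ hr).mpr (by simp)
      have hle : r ≤ φ k := by simpa using (hφ.le_iff_le hr hk).mpr hrk
      exact congrArg Fin.succ (le_antisymm hle (Fin.castSucc_lt_succ_iff.mp hlt))
  · rintro rfl p hp
    rw [Fin.castSucc_lt_succ_iff, hφ.le_iff_le hp hk]

theorem fitsFirstBlock_and_prev_lt_iff (hφ : IsShuffleBlocks t φ) (hm : (m : ℕ) ≤ t) :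
    (FitsFirstBlock t φ ℓ m ∧ ∀ k : Fin n, ℓ = k.succ → (φ k : ℕ) < t) ↔ succPerm φ ℓ = m := by
  cases ℓ using Fin.cases with
  | zero => simp [fitsFirstBlock_zero_iff hm, eq_comm, Fin.succ_ne_zero]
  | succ k =>
    simp only [Fin.succ_inj, forall_eq', succPerm_succ]
    constructor
    · rintro ⟨hfit, hk⟩
      exact ((fitsFirstBlock_succ_iff hφ hm hk).mp hfit).symm
    · rintro rfl
      have hk : (φ k : ℕ) < t := by simpa [Nat.succ_le_iff] using hm
      exact ⟨(fitsFirstBlock_succ_iff hφ hm hk).mpr rfl, hk⟩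

end Shuffle

section Omega

variable {i j : ℕ}

theorem prevIdx_succ {n : ℕ} (k : Fin n) : prevIdx k.succ = k.castSucc := rfl

theorem mem_shuffleA3_iff {ℓ : Fin (i + j + 2)} {σ : Equiv.Perm (Fin (i + j + 2))} :
    (ℓ, σ) ∈ shuffleA3 i j ↔
      IsShuffleBlocks (i + 1) σ ∧
        (∀ k : Fin (i + j + 1), ℓ = k.succ → (σ k.castSucc : ℕ) < i + 1) ∧
          (σ ℓ : ℕ) < i + 1 := by
  simp only [shuffleA3, Set.mem_ofPred_eq, Nat.lt_succ_iff]
  refine and_congr_right fun _ => and_congr_left fun _ => ?_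
  cases ℓ using Fin.cases with
  | zero => simp [eq_comm, Fin.succ_ne_zero]
  | succ k => simp [prevIdx_succ]

theorem permInsert_mem_shuffleA3_iff {ℓ m : Fin (i + j + 2)} {φ : Equiv.Perm (Fin (i + j + 1))} :
    (ℓ, permInsert ℓ m φ) ∈ shuffleA3 i j ↔
      (m : ℕ) ≤ i ∧ IsShuffleBlocks i φ ∧ succPerm φ ℓ = m := by
  rw [mem_shuffleA3_iff, permInsert_apply_self, Nat.lt_succ_iff, ← and_assoc, and_comm]
  refine and_congr_right fun hm => ?_
  have hadjacent : ∀ k : Fin (i + j + 1), ℓ = k.succ →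
      ((permInsert ℓ m φ k.castSucc : ℕ) < i + 1 ↔ (φ k : ℕ) < i) := by
    rintro k rfl
    rw [← Fin.succAbove_succ_self, permInsert_apply_succAbove, val_succAbove_lt_succ_iff hm]
  rw [isShuffleBlocks_permInsert_iff hm, and_assoc,
    forall_congr' fun k => imp_congr_right (hadjacent k)]
  exact and_congr_right fun hφ => fitsFirstBlock_and_prev_lt_iff hφ hm

theorem omegaRel_iff {ℓ : Fin (i + j + 2)} {σ : Equiv.Perm (Fin (i + j + 2))} {m : Fin (i + 1)}
    {φ : Equiv.Perm (Fin (i + j + 1))} :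
    omegaRel i j ℓ σ m φ ↔ permInsert ℓ (Fin.castLE (by omega) m) φ = σ :=
  succAbove_comp_eq_comp_succAbove_iff

theorem existsUnique_omegaRel_of_mem_shuffleA3
    {p : Fin (i + j + 2) × Equiv.Perm (Fin (i + j + 2))} (hp : p ∈ shuffleA3 i j) :
    ∃! mφ : Fin (i + 1) × Equiv.Perm (Fin (i + j + 1)),
      IsShuffleBlocks i mφ.2 ∧ omegaRel i j p.1 p.2 mφ.1 mφ.2 := by
  obtain ⟨ℓ, σ⟩ := p
  obtain ⟨⟨m, φ⟩, rfl⟩ := (permInsert_bijective ℓ).surjective σ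
  obtain ⟨hm, hφ, -⟩ := permInsert_mem_shuffleA3_iff.mp hp
  refine ⟨(⟨m, Nat.lt_succ_of_le hm⟩, φ), ⟨hφ, omegaRel_iff.mpr rfl⟩, ?_⟩
  rintro ⟨m', φ'⟩ ⟨-, hrel⟩
  obtain ⟨rfl, rfl⟩ := Prod.mk_inj.mp
    ((permInsert_bijective ℓ).injective (a₁ := (_, _)) (omegaRel_iff.mp hrel))
  rfl

theorem existsUnique_mem_shuffleA3_of_isShuffleBlocks (m : Fin (i + 1))
    {φ : Equiv.Perm (Fin (i + j + 1))} (hφ : IsShuffleBlocks i φ) :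
    ∃! p : Fin (i + j + 2) × Equiv.Perm (Fin (i + j + 2)),
      p ∈ shuffleA3 i j ∧ omegaRel i j p.1 p.2 m φ := by
  obtain ⟨ℓ, hℓ⟩ := (succPerm φ).surjective (Fin.castLE (by omega) m)
  have hmem : (ℓ, permInsert ℓ (Fin.castLE (by omega) m) φ) ∈ shuffleA3 i j :=
    permInsert_mem_shuffleA3_iff.mpr ⟨Nat.le_of_lt_succ m.2, hφ, hℓ⟩
  refine ⟨_, ⟨hmem, omegaRel_iff.mpr rfl⟩, ?_⟩
  rintro ⟨ℓ', σ'⟩ ⟨hmem', hrel⟩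
  obtain rfl : permInsert ℓ' (Fin.castLE (by omega) m) φ = σ' := omegaRel_iff.mp hrel
  have hℓ' := (permInsert_mem_shuffleA3_iff.mp hmem').2.2
  obtain rfl : ℓ' = ℓ := (succPerm φ).injective (hℓ'.trans hℓ.symm)
  rfl

theorem neg_one_pow_mul_sign_eq_of_omegaRel {ℓ : Fin (i + j + 2)}
    {σ : Equiv.Perm (Fin (i + j + 2))} {m : Fin (i + 1)} {φ : Equiv.Perm (Fin (i + j + 1))}
    (h : omegaRel i j ℓ σ m φ) :
    (-1 : ℤˣ) ^ (ℓ : ℕ) * Equiv.Perm.sign σ = (-1 : ℤˣ) ^ (m : ℕ) * Equiv.Perm.sign φ := by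
  rw [← omegaRel_iff.mp h, sign_permInsert, mul_comm, mul_assoc, ← mul_pow]
  simp

end Omega

section Multichain

variable {L}

theorem tauMul_le_iff {n : ℕ} {a : Fin n → L} {r : Fin n} {x : L} :
    (tauMul L a).1 r ≤ x ↔ ∀ s, r ≤ s → a s ≤ x :=
  (Finset.sup'_le_iff Finset.nonempty_Ici a).trans (by simp only [Finset.mem_Ici])

theorem mdel_tauMul {n : ℕ} {ℓ : Fin (n + 1)} {a : Fin (n + 1) → L}
    (h : ∀ k : Fin n, ℓ = k.succ → a ℓ ≤ a k.castSucc) :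
    mdel L ℓ (tauMul L a) = tauMul L (a ∘ ℓ.succAbove) := by
  refine Subtype.ext (funext fun r => eq_of_forall_ge_iff fun x => ?_)
  change (tauMul L a).1 (ℓ.succAbove r) ≤ x ↔ _
  simp only [tauMul_le_iff, Fin.forall_iff_succAbove ℓ, Function.comp_apply,
    Fin.succAbove_le_succAbove_iff, and_iff_right_iff_imp]
  intro hx hr
  cases ℓ using Fin.cases with
  | zero => simp at hr
  | succ k =>
    have hrk : r ≤ k := by
      simpa [Fin.succAbove_lt_iff_castSucc_lt] using hr.lt_of_ne (Fin.succAbove_ne _ _)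
    have hk : a k.castSucc ≤ x := by simpa using hx k hrk
    exact (h k rfl).trans hk

theorem concatT_antitoneOn {a b n : ℕ} (h : a + b = n) {u : Fin a → L} (hu : Antitone u)
    (v : Fin b → L) : AntitoneOn (concatT L h u v) {r | (r : ℕ) < a} := by
  intro r hr s hs hrs
  rw [Set.mem_ofPred_eq] at hr hs
  simp only [concatT, hr, hs, dif_pos]
  exact hu hrs

theorem mdel_tauMul_comp_of_mem_shuffleA3 {i j : ℕ} {a : Fin (i + j + 2) → L}
    (ha : AntitoneOn a {r | (r : ℕ) < i + 1})
    {p : Fin (i + j + 2) × Equiv.Perm (Fin (i + j + 2))} (hp : p ∈ shuffleA3 i j) :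
    mdel L p.1 (tauMul L (a ∘ p.2)) = tauMul L ((a ∘ p.2) ∘ p.1.succAbove) := by
  obtain ⟨ℓ, σ⟩ := p
  obtain ⟨hσ, hprev, hℓ⟩ := mem_shuffleA3_iff.mp hp
  refine mdel_tauMul ?_
  rintro k rfl
  exact ha (hprev k rfl) hℓ ((hσ.le_iff_le (hprev k rfl) hℓ).mpr k.castSucc_le_succ)

end Multichain

theorem omega_bijection_A3_general (i j : ℕ) :
    (∀ p ∈ shuffleA3 i j,
        ∃! mφ : Fin (i + 1) × Equiv.Perm (Fin (i + j + 1)),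
          IsShuffleBlocks i mφ.2 ∧ omegaRel i j p.1 p.2 mφ.1 mφ.2) ∧
    (∀ mφ : Fin (i + 1) × Equiv.Perm (Fin (i + j + 1)), IsShuffleBlocks i mφ.2 →
        ∃! p : Fin (i + j + 2) × Equiv.Perm (Fin (i + j + 2)),
          p ∈ shuffleA3 i j ∧ omegaRel i j p.1 p.2 mφ.1 mφ.2) ∧
    (∀ (p : Fin (i + j + 2) × Equiv.Perm (Fin (i + j + 2)))
        (mφ : Fin (i + 1) × Equiv.Perm (Fin (i + j + 1))), omegaRel i j p.1 p.2 mφ.1 mφ.2 →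
        ((-1 : ℤˣ) ^ ((p.1 : ℕ)) * Equiv.Perm.sign p.2 =
          (-1 : ℤˣ) ^ ((mφ.1 : ℕ)) * Equiv.Perm.sign mφ.2)) ∧
    (∀ a : Fin (i + j + 2) → L, AntitoneOn a {r | (r : ℕ) < i + 1} →
        ∀ p ∈ shuffleA3 i j, ∀ mφ : Fin (i + 1) × Equiv.Perm (Fin (i + j + 1)),
        omegaRel i j p.1 p.2 mφ.1 mφ.2 →
        (mdel L p.1 (tauMul L (a ∘ ⇑p.2)) = tauMul L ((a ∘ ⇑p.2) ∘ p.1.succAbove) ∧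
          tauMul L ((a ∘ ⇑p.2) ∘ p.1.succAbove) =
            tauMul L ((a ∘ (Fin.castLE (by omega) mφ.1).succAbove) ∘ ⇑mφ.2))) :=
  ⟨fun _ hp => existsUnique_omegaRel_of_mem_shuffleA3 hp,
    fun mφ hφ => existsUnique_mem_shuffleA3_of_isShuffleBlocks mφ.1 hφ,
    fun _ _ hrel => neg_one_pow_mul_sign_eq_of_omegaRel hrel,
    fun a ha _ hp _ hrel => ⟨mdel_tauMul_comp_of_mem_shuffleA3 ha hp,
      congrArg (fun f => tauMul L (a ∘ f)) hrel.symm⟩⟩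

/-- For `i, j ≥ 0`:
(i) the relation `φ ∘ ∂_{i+j+1}^{(m)} = ∂_{i+j+1}^{(ℓ)} ∘ σ` determines a well-defined map
`Ω_{i,j} : A₃^{i,j} → {0,…,i} × S_{i-1,j}`, and it is a bijection (each `(ℓ,σ) ∈ A₃^{i,j}`
has a unique solution `(m,φ)`, and conversely);
(ii) whenever `Ω_{i,j}(ℓ,σ) = (m,φ)` one has `(-1)^ℓ sgn(σ) = (-1)^m sgn(φ)`;
(iii) for every `i`-multichain `c`, `j`-multichain `c′` in the finite lattice `L`, and
`(ℓ,σ) ∈ A₃^{i,j}` with `Ω_{i,j}(ℓ,σ) = (m,φ)`,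
`∂_{i+j+1}^{(ℓ)}[τ((c·c′)_σ)] = τ(∂_{i+j+1}^{(ℓ)}[(c·c′)_σ]) = τ((∂_{i+j+1}^{(m)}(c·c′))_φ)`. -/
theorem omega_bijection_A3 [Fintype L] (i j : ℕ) :
    (∀ p ∈ shuffleA3 i j,
        ∃! mφ : Fin (i + 1) × Equiv.Perm (Fin (i + j + 1)),
          IsShuffleBlocks i mφ.2 ∧ omegaRel i j p.1 p.2 mφ.1 mφ.2) ∧
    (∀ mφ : Fin (i + 1) × Equiv.Perm (Fin (i + j + 1)), IsShuffleBlocks i mφ.2 →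
        ∃! p : Fin (i + j + 2) × Equiv.Perm (Fin (i + j + 2)),
          p ∈ shuffleA3 i j ∧ omegaRel i j p.1 p.2 mφ.1 mφ.2) ∧
    (∀ p ∈ shuffleA3 i j, ∀ mφ : Fin (i + 1) × Equiv.Perm (Fin (i + j + 1)),
        IsShuffleBlocks i mφ.2 → omegaRel i j p.1 p.2 mφ.1 mφ.2 →
        ((-1 : ℤˣ) ^ ((p.1 : ℕ)) * Equiv.Perm.sign p.2 =
          (-1 : ℤˣ) ^ ((mφ.1 : ℕ)) * Equiv.Perm.sign mφ.2)) ∧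
    (∀ (c : MChain L (i + 1)) (c' : MChain L (j + 1))
        (p : Fin (i + j + 2) × Equiv.Perm (Fin (i + j + 2))), p ∈ shuffleA3 i j →
        ∀ mφ : Fin (i + 1) × Equiv.Perm (Fin (i + j + 1)),
        IsShuffleBlocks i mφ.2 → omegaRel i j p.1 p.2 mφ.1 mφ.2 →
        (mdel L p.1 (tauMul L (concatT L (by omega) c.1 c'.1 ∘ ⇑p.2)) =
            tauMul L ((concatT L (by omega) c.1 c'.1 ∘ ⇑p.2) ∘ p.1.succAbove) ∧
          tauMul L ((concatT L (by omega) c.1 c'.1 ∘ ⇑p.2) ∘ p.1.succAbove) =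
            tauMul L ((concatT L (by omega) c.1 c'.1 ∘
              (Fin.castLE (by omega) mφ.1).succAbove) ∘ ⇑mφ.2))) := by
  obtain ⟨hΩ, hΩinv, hsign, hdel⟩ := omega_bijection_A3_general L i j
  exact ⟨hΩ, hΩinv, fun p _ mφ _ => hsign p mφ, fun c c' p hp mφ _ =>
    hdel _ (concatT_antitoneOn _ c.2 c'.1) p hp mφ⟩

end
end
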